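/- Let n ≥ 3, a = (a_1,…,a_n) ∈ ℂ^n and a' = (a'_1,…,a'_{n−2}) ∈ ℂ^{n−2} with every a_j and a'_k purely imaginary, and let s ∈ ℂ with Re(s) > 0. Then I_{n,n−2;a,a'}(s) = [∏_{1≤j≤n} ∏_{1≤k≤n−2} Γ_ℝ(s+a_j+a'_k)] · (1/(4πi))·∫_{w} [∏_{j=1}^{n} Γ_ℝ(w−a_j) / ∏_{j=1}^{n−2} Γ_ℝ(s+w+a'_j)] dw. -/

import Mathlib

open MeasureTheory Complex

noncomputable section

/-- `Γ_ℝ(s) = π^{-s/2} Γ(s/2)`. -/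
def GammaR (s : ℂ) : ℂ := (Real.pi : ℂ) ^ (-s / 2) * Complex.Gamma (s / 2)

/-- Modified Bessel function of the second kind, via its integral representation. -/
def BesselK (ν : ℂ) (y : ℝ) : ℂ :=
  (1 / 2) * ∫ t in Set.Ioi (0 : ℝ),
    Complex.exp (-((y : ℂ) / 2) * ((t : ℂ) + 1 / (t : ℂ))) * (t : ℂ) ^ ν / (t : ℂ)

/-- Extend a finite real tuple to `ℕ`, defaulting to `1`. -/
def extR {k : ℕ} (t : Fin k → ℝ) : ℕ → ℝ := fun i => if h : i < k then t ⟨i, h⟩ else 1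

/-- Extend a finite real tuple to `ℕ`, defaulting to `0`. -/
def extR0 {k : ℕ} (t : Fin k → ℝ) : ℕ → ℝ := fun i => if h : i < k then t ⟨i, h⟩ else 0

/-- The positive orthant. -/
def posSet (k : ℕ) : Set (Fin k → ℝ) := {t | ∀ j, 0 < t j}

/-- `|a| = a_1 + ⋯ + a_n` (0-based indexing). -/
def sumA (n : ℕ) (a : ℕ → ℂ) : ℂ := ∑ j ∈ Finset.range n, a j

/-- `ã_j = a_{j+1} + a_1/(n-1)` (0-based indexing). -/
def tildeA (n : ℕ) (a : ℕ → ℂ) : ℕ → ℂ := fun j => a (j + 1) + a 0 / ((n : ℂ) - 1)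

/-- The normalized radial part `Ŵ^A_{n,a}` of the class one `GL_n(ℝ)` Whittaker function,
as a function of `(y_1,…,y_{n-1})` (0-based indexing). -/
def WhittAr : ℕ → (ℕ → ℂ) → (ℕ → ℝ) → ℂ
  | 0, _, _ => 1
  | 1, _, _ => 1
  | 2, a, y => 2 * ((y 0 : ℂ) ^ ((a 0 + a 1) / 2)) *
      BesselK ((a 0 - a 1) / 2) (2 * Real.pi * y 0)
  | (n + 3), a, y =>
      ∫ t in posSet (n + 2),
        WhittAr (n + 2) (tildeA (n + 3) a)
            (fun j => y (j + 1) * Real.sqrt (extR t (j + 1) / extR t j)) *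
          (∏ j ∈ Finset.range (n + 2),
            Complex.exp (((-(Real.pi * y j) ^ 2 * extR t j - 1 / extR t j : ℝ) : ℂ)) *
              ((Real.pi * y j : ℝ) : ℂ) ^ ((((n + 2 - j : ℕ) : ℂ) * a 0) / ((n + 2 : ℕ) : ℂ)) *
              ((extR t j : ℝ) : ℂ) ^ ((((n + 3 : ℕ) : ℂ) * a 0) / (2 * ((n + 2 : ℕ) : ℂ)))) *
          ((Real.pi * extR t (n + 1) : ℝ) : ℂ) ^ (-(sumA (n + 3) a) / 2) *
          (∏ j ∈ Finset.range (n + 2), ((extR t j : ℝ) : ℂ))⁻¹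

/-- `Ŵ^A_{n,a}` as a function of the full tuple `(y_1,…,y_n)`. -/
def WhittAhat (n : ℕ) (a : ℕ → ℂ) (y : ℕ → ℝ) : ℂ :=
  ((y (n - 1) : ℝ) : ℂ) ^ sumA n a * WhittAr n a y

/-- The Mellin transform `U_{n,a}` (0-based: `s j` stands for `s_{j+1}`). -/
def Ufun (n : ℕ) (a : ℕ → ℂ) (s : ℕ → ℂ) : ℂ :=
  ∫ y in posSet (n - 1),
    WhittAr n a (extR y) *
      ∏ j ∈ Finset.range (n - 1), ((extR y j : ℝ) : ℂ) ^ s j / ((extR y j : ℝ) : ℂ)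

/-- The normalized radial part `Ŵ^B_{n,b}` of the class one `SO_{2n+1}(ℝ)` Whittaker function. -/
def WhittBr : ℕ → (ℕ → ℂ) → (ℕ → ℝ) → ℂ
  | 0, _, _ => 1
  | 1, b, y => 2 * BesselK (b 0 / 2) (2 * Real.pi * y 0)
  | (n + 2), b, y =>
      ∫ p in (posSet (n + 2) ×ˢ posSet (n + 1)),
        WhittBr (n + 1) b
            (fun j =>
              if j < n then
                y (j + 1) *
                  Real.sqrt (extR p.1 (j + 1) * extR p.2 (j + 1) /
                    (extR p.1 (j + 2) * extR p.2 j))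
              else y (n + 1) * Real.sqrt (extR p.1 (n + 1) / extR p.2 n)) *
          (∏ j ∈ Finset.range (n + 2),
            Complex.exp (((-(Real.pi * y j) ^ 2 * extR p.1 j - 1 / extR p.1 j : ℝ) : ℂ)) *
              ((Real.pi * y j : ℝ) : ℂ) ^ b (n + 1)) *
          (∏ j ∈ Finset.range (n + 1),
            Complex.exp (((-(Real.pi * y j) ^ 2 * (extR p.1 j / extR p.1 (j + 1)) * extR p.2 j -
                  1 / extR p.2 j : ℝ) : ℂ)) *
              ((extR p.1 (j + 1) * extR p.2 j : ℝ) : ℂ) ^ (b (n + 1) / 2)) *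
          ((extR p.1 0 : ℝ) : ℂ) ^ b (n + 1) *
          (∏ j ∈ Finset.range (n + 1), ((extR p.2 j : ℝ) : ℂ))⁻¹ *
          (∏ j ∈ Finset.range (n + 2), ((extR p.1 j : ℝ) : ℂ))⁻¹

/-- The Mellin transform `V_{n,b}` (0-based: `s j` stands for `s_{j+1}`). -/
def Vfun (n : ℕ) (b : ℕ → ℂ) (s : ℕ → ℂ) : ℂ :=
  ∫ y in posSet n,
    WhittBr n b (extR y) *
      ∏ j ∈ Finset.range n, ((extR y j : ℝ) : ℂ) ^ s j / ((extR y j : ℝ) : ℂ)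

/-- Integral over the vertical line `Re z = c`, i.e. `i·∫_ℝ f(c+it) dt`. -/
def VInt (c : ℝ) (f : ℂ → ℂ) : ℂ := Complex.I * ∫ t : ℝ, f (c + t * Complex.I)

/-- Iterated integral over `k` vertical lines with abscissas `c 0, …, c (k-1)`;
the integrand is fed the contour points as a 0-based sequence. -/
def VIntK (k : ℕ) (c : ℕ → ℝ) (f : (ℕ → ℂ) → ℂ) : ℂ :=
  Complex.I ^ k * ∫ t : Fin k → ℝ, f (fun i => (c i : ℂ) + (extR0 t i : ℝ) * Complex.I)



/-- The archimedean `GL_n × GL_m` zeta integral (`m < n`) in torus coordinates. -/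
def zetaGLm (n m : ℕ) (a a' : ℕ → ℂ) (s : ℂ) : ℂ :=
  (2 : ℂ) ^ m * ∫ y in posSet m,
    WhittAhat n a (extR y) * WhittAhat m a' (extR y) *
      ∏ j ∈ Finset.range m,
        ((extR y j : ℝ) : ℂ) ^ (((j + 1 : ℕ) : ℂ) * s) / ((extR y j : ℝ) : ℂ)

open scoped ENNReal

/-- Complex numbers together with an extended nonnegative majorant of their norm, normalized to
vanish when the majorant is infinite, as a submonoid of `ℂ × ℝ≥0∞`. -/
def majSubmonoid : Submonoid (ℂ × ℝ≥0∞) where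
  carrier := {p | ‖p.1‖ₑ ≤ p.2 ∧ (p.2 = ∞ → p.1 = 0)}
  one_mem' := by simp
  mul_mem' := by
    rintro ⟨z, r⟩ ⟨w, t⟩ ⟨h1, h2⟩ ⟨h3, h4⟩
    refine ⟨by simpa [enorm_mul] using mul_le_mul' h1 h3, fun h => ?_⟩
    simp only [Prod.mk_mul_mk, ENNReal.mul_eq_top] at h h2 h4 ⊢
    rcases h with h | h
    · rw [h4 h.2, mul_zero]
    · rw [h2 h.1, zero_mul]

/-- Complex numbers together with an extended nonnegative majorant of their norm. -/
def Maj : Type := majSubmonoid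

namespace Maj

instance : CommMonoid Maj := inferInstanceAs (CommMonoid majSubmonoid)

instance : MeasurableSpace Maj := inferInstanceAs (MeasurableSpace majSubmonoid)

instance : MeasurableMul₂ Maj where
  measurable_mul := by
    have h : Measurable fun p : majSubmonoid × majSubmonoid =>
        ((p.1.1.1 * p.2.1.1, p.1.1.2 * p.2.1.2) : ℂ × ℝ≥0∞) := by fun_prop
    exact Measurable.subtype_mk h (h := fun p => (p.1 * p.2).2)

/-- The complex value. -/
def val (m : Maj) : ℂ := m.1.1

/-- The majorant. -/
def maj (m : Maj) : ℝ≥0∞ := m.1.2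

/-- Constructor from a value and a majorant. -/
def mk (z : ℂ) (r : ℝ≥0∞) (h : ‖z‖ₑ ≤ r) (h' : r = ∞ → z = 0) : Maj := ⟨(z, r), h, h'⟩

lemma enorm_val_le (m : Maj) : ‖m.val‖ₑ ≤ m.maj := m.2.1

lemma val_eq_zero {m : Maj} (h : m.maj = ∞) : m.val = 0 := m.2.2 h

lemma ext' {m m' : Maj} (h1 : m.val = m'.val) (h2 : m.maj = m'.maj) : m = m' :=
  Subtype.ext (Prod.ext h1 h2)

@[simp] lemma val_mul (m m' : Maj) : (m * m').val = m.val * m'.val := rfl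

@[simp] lemma maj_mul (m m' : Maj) : (m * m').maj = m.maj * m'.maj := rfl

@[simp] lemma val_one : (1 : Maj).val = 1 := rfl

@[simp] lemma maj_one : (1 : Maj).maj = 1 := rfl

@[simp] lemma val_prod {ι : Type*} (s : Finset ι) (f : ι → Maj) :
    (∏ i ∈ s, f i).val = ∏ i ∈ s, (f i).val :=
  map_prod ((MonoidHom.fst ℂ ℝ≥0∞).comp majSubmonoid.subtype) f s

@[simp] lemma maj_prod {ι : Type*} (s : Finset ι) (f : ι → Maj) :
    (∏ i ∈ s, f i).maj = ∏ i ∈ s, (f i).maj :=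
  map_prod ((MonoidHom.snd ℂ ℝ≥0∞).comp majSubmonoid.subtype) f s

@[fun_prop] lemma measurable_val : Measurable val := measurable_fst.comp measurable_subtype_coe

@[fun_prop] lemma measurable_maj : Measurable maj := measurable_snd.comp measurable_subtype_coe

/-- A complex number with its own norm as majorant. -/
def of (z : ℂ) : Maj := mk z ‖z‖ₑ le_rfl (by simp)

@[simp] lemma val_of (z : ℂ) : (of z).val = z := rfl

@[simp] lemma maj_of (z : ℂ) : (of z).maj = ‖z‖ₑ := rfl

lemma of_mul (z w : ℂ) : of (z * w) = of z * of w := ext' rfl (by simp [enorm_mul])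

@[fun_prop] lemma measurable_of : Measurable of :=
  Measurable.subtype_mk (by fun_prop)

/-- The exponential of a complex number, with its norm as majorant. -/
def E (θ : ℂ) : Maj := of (Complex.exp θ)

@[fun_prop] lemma measurable_E : Measurable E := by unfold E; fun_prop

lemma E_add (θ η : ℂ) : E (θ + η) = E θ * E η := by simp [E, Complex.exp_add, of_mul]

@[simp] lemma E_zero : E 0 = 1 := ext' (by simp [E]) (by simp [E])

variable {X Y : Type*} [MeasureSpace X] [MeasureSpace Y]

open Classical in
/-- The integral of a function with majorants: it remembers the integral of the majorant, and has
value zero if the latter is infinite. -/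
def int (f : X → Maj) : Maj :=
  if h : ∫⁻ x, (f x).maj = ∞ then mk 0 ∞ (by simp) fun _ => rfl
  else mk (∫ x, (f x).val) (∫⁻ x, (f x).maj)
    ((enorm_integral_le_lintegral_enorm _).trans (lintegral_mono fun x => (f x).enorm_val_le))
    fun h' => absurd h' h

@[simp] lemma maj_int (f : X → Maj) : (int f).maj = ∫⁻ x, (f x).maj := by
  unfold int; split_ifs with h
  · exact h.symm
  · rfl

lemma val_int {f : X → Maj} (h : ∫⁻ x, (f x).maj ≠ ∞) : (int f).val = ∫ x, (f x).val := by
  unfold int; rw [dif_neg h]; rfl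

lemma int_congr {f g : X → Maj} (h : ∀ x, f x = g x) : int f = int g := by
  rw [funext h]

lemma ext_of_ne_top {m m' : Maj} (h : m.maj = m'.maj) (h' : m.maj ≠ ∞ → m.val = m'.val) :
    m = m' := by
  by_cases ht : m.maj = ∞
  · exact ext' (by rw [val_eq_zero ht, val_eq_zero (h ▸ ht)]) h
  · exact ext' (h' ht) h

lemma integrable_val {f : X → Maj} (hf : Measurable f) (h : ∫⁻ x, (f x).maj ≠ ∞) :
    Integrable fun x => (f x).val :=
  ⟨(measurable_val.comp hf).aestronglyMeasurable,
    (lintegral_mono fun x => (f x).enorm_val_le).trans_lt h.lt_top⟩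

lemma int_const_mul (c : Maj) {f : X → Maj} (hf : Measurable f) :
    int (fun x => c * f x) = c * int f := by
  have hm : ∫⁻ x, (c * f x).maj = c.maj * ∫⁻ x, (f x).maj := by
    simp only [maj_mul]; exact lintegral_const_mul _ (by fun_prop)
  refine ext_of_ne_top (by simpa using hm) fun h => ?_
  rw [maj_int] at h
  rw [val_int h, val_mul]
  simp only [val_mul]
  rw [integral_const_mul]
  by_cases hc : c.maj = ∞
  · simp [val_eq_zero hc]
  by_cases hi : ∫⁻ x, (f x).maj = ∞
  · have hc0 : c.maj = 0 := by
      by_contra h0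
      rw [hm, hi, ENNReal.mul_top h0] at h
      exact h rfl
    have := c.enorm_val_le
    simp [hc0] at this
    simp [this]
  · rw [val_int hi]

lemma int_mul_const (c : Maj) {f : X → Maj} (hf : Measurable f) :
    int (fun x => f x * c) = int f * c := by
  simp only [mul_comm _ c]; exact int_const_mul c hf

lemma int_comp {e : X → Y} (he : MeasurePreserving e) (he' : MeasurableEmbedding e) (f : Y → Maj) :
    int (fun x => f (e x)) = int f := by
  have hm : ∫⁻ x, (f (e x)).maj = ∫⁻ y, (f y).maj := he.lintegral_comp_emb he' fun y => (f y).maj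
  refine ext_of_ne_top (by simpa using hm) fun h => ?_
  rw [maj_int] at h
  rw [val_int h, val_int (hm ▸ h)]
  exact he.integral_comp he' fun y => (f y).val

variable [SFinite (volume : Measure X)] [SFinite (volume : Measure Y)]

@[fun_prop] lemma measurable_int {Z : Type*} [MeasurableSpace Z] {f : Z → X → Maj}
    (hf : Measurable (Function.uncurry f)) : Measurable fun z => int (f z) := by
  have h2 : Measurable fun z => ∫⁻ x, (f z x).maj :=
    Measurable.lintegral_prod_right (f := fun z x => (f z x).maj) (measurable_maj.comp hf)
  have h1 : Measurable fun z => ∫ x, (f z x).val :=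
    (StronglyMeasurable.integral_prod_right (f := fun z x => (f z x).val)
      (measurable_val.comp hf).stronglyMeasurable).measurable
  have hS : MeasurableSet {z | ∫⁻ x, (f z x).maj = ∞} := h2 (measurableSet_singleton _)
  refine Measurable.subtype_mk (f := fun z => ((int (f z)).val, (int (f z)).maj)) ?_
  refine Measurable.prodMk ?_ (by simpa using h2)
  have : (fun z => (int (f z)).val) =
      {z | ∫⁻ x, (f z x).maj = ∞}ᶜ.indicator fun z => ∫ x, (f z x).val := by
    ext z
    by_cases hz : ∫⁻ x, (f z x).maj = ∞
    · simp [hz, val_eq_zero (m := int (f z)) (by simpa using hz)]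
    · simp [hz, val_int hz]
  change Measurable fun z => (int (f z)).val
  rw [this]
  exact h1.indicator hS.compl

lemma int_prod {f : X × Y → Maj} (hf : Measurable f) :
    int f = int fun x => int fun y => f (x, y) := by
  have hm : ∫⁻ p, (f p).maj = ∫⁻ x, ∫⁻ y, (f (x, y)).maj :=
    lintegral_prod _ (by fun_prop)
  refine ext_of_ne_top (by simpa using hm) fun h => ?_
  rw [maj_int] at h
  rw [val_int h, val_int (by simpa [hm] using h)]
  have hfint := integrable_val hf h
  refine (integral_prod _ hfint).trans (integral_congr_ae ?_)
  have hfin : ∀ᵐ x, ∫⁻ y, (f (x, y)).maj < ∞ :=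
    ae_lt_top (Measurable.lintegral_prod_right (f := fun x y => (f (x, y)).maj)
      (measurable_maj.comp hf)) (hm ▸ h)
  filter_upwards [hfin] with x hx
  rw [val_int hx.ne]

lemma int_swap {f : X → Y → Maj} (hf : Measurable (Function.uncurry f)) :
    int (fun x => int fun y => f x y) = int fun y => int fun x => f x y := by
  refine (int_prod hf).symm.trans (Eq.trans ?_
    (int_prod (f := fun p : Y × X => f p.2 p.1) (hf.comp measurable_swap)))
  exact (int_comp (e := Prod.swap (α := X) (β := Y)) Measure.measurePreserving_swap
    MeasurableEquiv.prodComm.measurableEmbedding fun p : Y × X => f p.2 p.1)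

omit [SFinite (volume : Measure X)] [SFinite (volume : Measure Y)] in
/-- `w` is the value of `m` whenever the majorant of `m` is finite. -/
def Rep (w : ℂ) (m : Maj) : Prop := m.maj ≠ ∞ → w = m.val

lemma Rep.mul {w w' : ℂ} {m m' : Maj} (h : Rep w m) (h' : Rep w' m') :
    Rep (w * w') (m * m') := by
  intro hf
  rw [maj_mul, Ne, ENNReal.mul_eq_top, not_or] at hf
  by_cases hm : m.maj = ∞
  · have h0 : m'.maj = 0 := by simpa [hm] using hf.2
    have hv : m'.val = 0 := by simpa [h0] using m'.enorm_val_le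
    simp [h' (by simp [h0]), hv]
  by_cases hm' : m'.maj = ∞
  · have h0 : m.maj = 0 := by simpa [hm'] using hf.1
    have hv : m.val = 0 := by simpa [h0] using m.enorm_val_le
    simp [h hm, hv]
  · simp [h hm, h' hm']

lemma rep_E (θ : ℂ) : Rep (Complex.exp θ) (E θ) := fun _ => rfl

lemma rep_int {X : Type*} [MeasureSpace X] {w : X → ℂ} {m : X → Maj} (hm : Measurable m)
    (h : ∀ x, Rep (w x) (m x)) : Rep (∫ x, w x) (int m) := by
  intro hf
  rw [maj_int] at hf
  rw [val_int hf]
  refine integral_congr_ae ?_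
  filter_upwards [ae_lt_top (measurable_maj.comp hm) hf] with x hx
  exact h x hx.ne

lemma int_cons {n : ℕ} {f : (Fin (n + 1) → ℝ) → Maj} (hf : Measurable f) :
    int f = int fun y : ℝ => int fun x : Fin n → ℝ => f (Fin.cons y x) := by
  have h := volume_preserving_piFinSuccAbove (fun _ : Fin (n + 1) => ℝ) 0
  rw [← int_comp h.symm (MeasurableEquiv.measurableEmbedding _) f]
  refine (int_prod (hf.comp (MeasurableEquiv.measurable _))).trans ?_
  simp only [MeasurableEquiv.piFinSuccAbove_symm_apply, Function.comp_apply]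
  simp [Fin.insertNthEquiv]

lemma int_snoc {n : ℕ} {f : (Fin (n + 1) → ℝ) → Maj} (hf : Measurable f) :
    int f = int fun y : ℝ => int fun x : Fin n → ℝ => f (Fin.snoc x y) := by
  have h := volume_preserving_piFinSuccAbove (fun _ : Fin (n + 1) => ℝ) (Fin.last n)
  rw [← int_comp h.symm (MeasurableEquiv.measurableEmbedding _) f]
  refine (int_prod (hf.comp (MeasurableEquiv.measurable _))).trans ?_
  simp only [MeasurableEquiv.piFinSuccAbove_symm_apply, Function.comp_apply]
  simp [Fin.insertNthEquiv]

lemma int_fin_zero (f : (Fin 0 → ℝ) → Maj) : int f = f Fin.elim0 := by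
  have hx : ∀ x : Fin 0 → ℝ, f x = f Fin.elim0 := fun x => by rw [Subsingleton.elim x Fin.elim0]
  have hv : (volume : Measure (Fin 0 → ℝ)) Set.univ = 1 := by
    rw [volume_pi, Measure.pi_univ]; simp
  refine ext_of_ne_top ?_ fun h => ?_
  · rw [maj_int]; simp [hx, hv]
  · rw [maj_int] at h
    rw [val_int h]
    simp [hx, Measure.real, hv]

lemma int_const_sub {n : ℕ} (c : Fin n → ℝ) (f : (Fin n → ℝ) → Maj) :
    int (fun x => f (c - x)) = int f :=
  int_comp (Measure.measurePreserving_sub_left volume c)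
    (MeasurableEquiv.subLeft c).measurableEmbedding f

lemma int_const_sub_real (c : ℝ) (f : ℝ → Maj) : int (fun x => f (c - x)) = int f :=
  int_comp (Measure.measurePreserving_sub_left volume c)
    (MeasurableEquiv.subLeft c).measurableEmbedding f

lemma int_add_const_real (c : ℝ) (f : ℝ → Maj) : int (fun x => f (x + c)) = int f :=
  int_comp (measurePreserving_add_right volume c) (MeasurableEquiv.addRight c).measurableEmbedding f

end Maj

open Maj

/-- The reciprocal exponentials of a tuple, completed by a final zero. -/
def expNegSnoc {n : ℕ} (u : Fin n → ℝ) : Fin (n + 1) → ℝ :=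
  Fin.snoc (α := fun _ => ℝ) (fun j => Real.exp (-u j)) 0

@[simp] lemma expNegSnoc_castSucc {n : ℕ} (u : Fin n → ℝ) (j : Fin n) :
    expNegSnoc u j.castSucc = Real.exp (-u j) := by simp [expNegSnoc]

@[simp] lemma expNegSnoc_last {n : ℕ} (u : Fin n → ℝ) : expNegSnoc u (Fin.last n) = 0 := by
  simp [expNegSnoc]

lemma expNegSnoc_nonneg {n : ℕ} (u : Fin n → ℝ) (j : Fin (n + 1)) : 0 ≤ expNegSnoc u j := by
  refine Fin.lastCases ?_ (fun i => ?_) j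
  · simp
  · simpa using (Real.exp_pos _).le

lemma measurable_expNegSnoc {n : ℕ} (j : Fin (n + 1)) :
    Measurable fun u : Fin n → ℝ => expNegSnoc u j := by
  refine Fin.lastCases ?_ (fun i => ?_) j
  · simp
  · simp only [expNegSnoc_castSucc]; fun_prop

@[fun_prop] lemma Measurable.expNegSnoc {Z : Type*} [MeasurableSpace Z] {n : ℕ}
    {u : Z → Fin n → ℝ} (hu : Measurable u) (j : Fin (n + 1)) :
    Measurable fun z => _root_.expNegSnoc (u z) j := (measurable_expNegSnoc j).comp hu

/-- The potential of the recursive kernel. -/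
def lamPot {n : ℕ} (x : Fin (n + 1) → ℝ) (u : Fin n → ℝ) : ℝ :=
  ∑ j : Fin n, (Real.exp (x j.castSucc - u j) + Real.exp (u j - x j.succ))

/-- The potential of the Baxter kernel. -/
def baxPot {n : ℕ} (v u : Fin n → ℝ) : ℝ :=
  ∑ j : Fin n, (Real.exp (u j - v j) + Real.exp (v j) * expNegSnoc u j.succ)

/-- The kernel of the operator raising the rank of Whittaker functions, in logarithmic
coordinates. -/
def lam {n : ℕ} (a : ℂ) (x : Fin (n + 1) → ℝ) (u : Fin n → ℝ) : Maj :=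
  E (-(Real.pi * lamPot x u : ℝ) + a / 2 * ((∑ j, x j - ∑ j, u j : ℝ) : ℂ))

/-- The kernel of the Baxter operator, in logarithmic coordinates. -/
def bax {n : ℕ} (γ : ℂ) (v u : Fin n → ℝ) : Maj :=
  E (-(Real.pi * baxPot v u : ℝ) + γ / 2 * ((∑ j, u j - ∑ j, v j : ℝ) : ℂ))

@[fun_prop] lemma Measurable.lam {Z : Type*} [MeasurableSpace Z] {n : ℕ} (a : ℂ)
    {x : Z → Fin (n + 1) → ℝ} {u : Z → Fin n → ℝ} (hx : Measurable x) (hu : Measurable u) :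
    Measurable fun z => _root_.lam a (x z) (u z) := by
  unfold _root_.lam lamPot; fun_prop

@[fun_prop] lemma Measurable.bax {Z : Type*} [MeasurableSpace Z] {n : ℕ} (γ : ℂ)
    {v u : Z → Fin n → ℝ} (hv : Measurable v) (hu : Measurable u) :
    Measurable fun z => _root_.bax γ (v z) (u z) := by
  unfold _root_.bax baxPot; fun_prop

/-- The gamma factor with its majorant. -/
def gam (s : ℂ) : Maj := int fun x : ℝ => E (-(Real.pi * Real.exp x : ℝ) + s / 2 * (x : ℂ))

/-- The `GL_n` Whittaker function in logarithmic coordinates. -/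
def psi : (n : ℕ) → (ℕ → ℂ) → (Fin n → ℝ) → Maj
  | 0, _, _ => 1
  | n + 1, a, x => int fun u : Fin n → ℝ => lam (a 0) x u * psi n (fun j => a (j + 1)) u

lemma psi_succ (n : ℕ) (a : ℕ → ℂ) (x : Fin (n + 1) → ℝ) :
    psi (n + 1) a x = int fun u => lam (a 0) x u * psi n (fun j => a (j + 1)) u := rfl

lemma measurable_psi : ∀ (n : ℕ) (a : ℕ → ℂ), Measurable (psi n a)
  | 0, _ => measurable_const
  | n + 1, a => by
    have := measurable_psi n fun j => a (j + 1)
    change Measurable fun x => int fun u => lam (a 0) x u * psi n (fun j => a (j + 1)) u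
    refine measurable_int ?_
    unfold Function.uncurry
    fun_prop

@[fun_prop] lemma Measurable.psi {Z : Type*} [MeasurableSpace Z] {n : ℕ} (a : ℕ → ℂ)
    {x : Z → Fin n → ℝ} (hx : Measurable x) : Measurable fun z => _root_.psi n a (x z) :=
  (measurable_psi n a).comp hx

lemma baxPot_succ {n : ℕ} (z x : Fin (n + 1) → ℝ) :
    baxPot z x = ∑ j, Real.exp (x j - z j) + ∑ j : Fin n, Real.exp (z j.castSucc - x j.succ) := by
  rw [baxPot, Finset.sum_add_distrib]
  congr 1
  rw [Fin.sum_univ_castSucc]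
  simp [Fin.succ_castSucc, Real.exp_sub, Real.exp_neg, div_eq_mul_inv, -Fin.castSucc_succ]

lemma lamPot_eq {n : ℕ} (x : Fin (n + 1) → ℝ) (u : Fin n → ℝ) :
    lamPot x u = ∑ j, Real.exp (x j) * expNegSnoc u j +
      ∑ j : Fin n, Real.exp (u j - x j.succ) := by
  rw [lamPot, Finset.sum_add_distrib]
  congr 1
  rw [Fin.sum_univ_castSucc]
  simp [Real.exp_sub, Real.exp_neg, div_eq_mul_inv]

/-- The pointwise identity behind the intertwining of Baxter operators and raising operators. -/
lemma bax_mul_lam {n : ℕ} (γ b : ℂ) (z : Fin (n + 1) → ℝ) (u v : Fin n → ℝ) (y : ℝ) :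
    let d : Fin (n + 1) → ℝ := fun j => -Real.log (Real.exp (-z j) + expNegSnoc u j)
    let x : Fin (n + 1) → ℝ := Fin.cons (y + d 0)
      ((fun j => Real.log (Real.exp (z j.castSucc) + Real.exp (u j)) + d j.succ) - v)
    bax γ z x * lam b x u =
      E (-(Real.pi * Real.exp y : ℝ) + (γ + b) / 2 * (y : ℂ)) * (lam b z v * bax γ v u) := by
  intro d x
  have hd : ∀ j, Real.exp (-d j) = Real.exp (-z j) + expNegSnoc u j := fun j => by
    simp only [d, neg_neg]
    exact Real.exp_log (add_pos_of_pos_of_nonneg (Real.exp_pos _) (expNegSnoc_nonneg u j))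
  have hA : ∀ j : Fin n, Real.exp (Real.log (Real.exp (z j.castSucc) + Real.exp (u j))) =
      Real.exp (z j.castSucc) + Real.exp (u j) := fun j =>
    Real.exp_log (by positivity)
  have hpot : baxPot z x + lamPot x u = Real.exp y + (lamPot z v + baxPot v u) := by
    have h1 : baxPot z x + lamPot x u = ∑ j, Real.exp (x j) * Real.exp (-d j) +
        ∑ j : Fin n, (Real.exp (z j.castSucc) + Real.exp (u j)) * Real.exp (-x j.succ) := by
      rw [baxPot_succ, lamPot_eq]
      simp only [hd, mul_add, add_mul, Finset.sum_add_distrib, ← Real.exp_add, ← sub_eq_add_neg]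
      ring
    rw [h1, Fin.sum_univ_succ, lamPot, baxPot, ← Finset.sum_add_distrib, add_assoc,
      ← Finset.sum_add_distrib]
    congr 1
    · simp [x, ← Real.exp_add]
    · refine Finset.sum_congr rfl fun j _ => ?_
      have e1 : Real.exp (x j.succ) * Real.exp (-d j.succ) =
          (Real.exp (z j.castSucc) + Real.exp (u j)) * Real.exp (-v j) := by
        rw [← hA j, ← Real.exp_add, ← Real.exp_add]
        congr 1
        simp only [x, Fin.cons_succ, Pi.sub_apply]; ring
      have e2 : (Real.exp (z j.castSucc) + Real.exp (u j)) * Real.exp (-x j.succ) =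
          Real.exp (v j) * (Real.exp (-z j.succ) + expNegSnoc u j.succ) := by
        rw [← hA j, ← hd, ← Real.exp_add, ← Real.exp_add]
        congr 1
        simp only [x, Fin.cons_succ, Pi.sub_apply]; ring
      rw [e1, e2]
      simp only [sub_eq_add_neg, Real.exp_add]
      ring
  have hsum : ∑ j, x j = y + ∑ j, z j + ∑ j, u j - ∑ j, v j := by
    have h2 : ∀ j : Fin n, Real.log (Real.exp (z j.castSucc) + Real.exp (u j)) + d j.castSucc =
        z j.castSucc + u j := fun j => by
      apply Real.exp_injective
      have : Real.exp (d j.castSucc) = (Real.exp (-d j.castSucc))⁻¹ := by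
        rw [← Real.exp_neg, neg_neg]
      rw [Real.exp_add, hA, this, hd, expNegSnoc_castSucc, Real.exp_neg, Real.exp_neg,
        Real.exp_add]
      field_simp
      ring
    have h3 : d (Fin.last n) = z (Fin.last n) := by simp [d]
    have h4 : ∑ j, d j = d 0 + ∑ j : Fin n, d j.succ := Fin.sum_univ_succ d
    have h5 : ∑ j, d j = ∑ j : Fin n, d j.castSucc + d (Fin.last n) := Fin.sum_univ_castSucc d
    have h6 : ∑ j : Fin n, Real.log (Real.exp (z j.castSucc) + Real.exp (u j)) +
        ∑ j : Fin n, d j.castSucc = ∑ j : Fin n, z j.castSucc + ∑ j, u j := by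
      rw [← Finset.sum_add_distrib, ← Finset.sum_add_distrib]
      exact Finset.sum_congr rfl fun j _ => h2 j
    rw [Fin.sum_univ_succ, Fin.sum_univ_castSucc z]
    simp only [x, Fin.cons_zero, Fin.cons_succ, Pi.sub_apply, Finset.sum_sub_distrib,
      Finset.sum_add_distrib]
    linarith
  simp only [bax, lam, ← E_add]
  congr 1
  have hp : ((baxPot z x : ℝ) : ℂ) + lamPot x u = Complex.exp y + (lamPot z v + baxPot v u) := by
    exact_mod_cast congrArg (fun r : ℝ => (r : ℂ)) hpot
  rw [hsum]
  push_cast at hp ⊢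
  linear_combination (-(Real.pi : ℂ)) * hp

@[fun_prop] lemma measurable_cons {Z : Type*} [MeasurableSpace Z] {n : ℕ} {y : Z → ℝ}
    {x : Z → Fin n → ℝ} (hy : Measurable y) (hx : Measurable x) :
    Measurable fun z => (Fin.cons (y z) (x z) : Fin (n + 1) → ℝ) := by
  refine measurable_pi_lambda _ fun j => ?_
  refine Fin.cases ?_ (fun i => ?_) j
  · simpa using hy
  · simp only [Fin.cons_succ]; fun_prop

@[fun_prop] lemma measurable_snoc {Z : Type*} [MeasurableSpace Z] {n : ℕ} {y : Z → ℝ}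
    {x : Z → Fin n → ℝ} (hx : Measurable x) (hy : Measurable y) :
    Measurable fun z => (Fin.snoc (x z) (y z) : Fin (n + 1) → ℝ) := by
  refine measurable_pi_lambda _ fun j => ?_
  refine Fin.lastCases ?_ (fun i => ?_) j
  · simpa using hy
  · simp only [Fin.snoc_castSucc]; fun_prop

/-- The intertwining of Baxter operators and raising operators. -/
lemma int_bax_mul_lam {n : ℕ} (γ b : ℂ) (z : Fin (n + 1) → ℝ) (u : Fin n → ℝ) :
    int (fun x => bax γ z x * lam b x u) =
      gam (γ + b) * int fun v => lam b z v * bax γ v u := by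
  rw [int_cons (by fun_prop)]
  set d : Fin (n + 1) → ℝ := fun j => -Real.log (Real.exp (-z j) + expNegSnoc u j) with hd
  set c : Fin n → ℝ :=
    fun j => Real.log (Real.exp (z j.castSucc) + Real.exp (u j)) + d j.succ with hc
  rw [← int_add_const_real (d 0), gam, ← int_mul_const _ (by fun_prop)]
  refine int_congr fun y => ?_
  rw [← int_const_sub c, ← int_const_mul _ (by fun_prop)]
  exact int_congr fun v => bax_mul_lam γ b z u v y

/-- Whittaker functions are eigenfunctions of the Baxter operators. -/
lemma int_bax_mul_psi : ∀ (n : ℕ) (γ : ℂ) (b : ℕ → ℂ) (z : Fin n → ℝ),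
    int (fun x => bax γ z x * psi n b x) = (∏ k ∈ Finset.range n, gam (γ + b k)) * psi n b z
  | 0, γ, b, z => by
    rw [int_fin_zero]
    simp [bax, baxPot, psi]
  | n + 1, γ, b, z => by
    have ih := int_bax_mul_psi n γ fun j => b (j + 1)
    calc int (fun x => bax γ z x * psi (n + 1) b x)
        = int fun x => int fun u => bax γ z x * lam (b 0) x u * psi n (fun j => b (j + 1)) u := by
          refine int_congr fun x => ?_
          rw [psi_succ, ← int_const_mul _ (by fun_prop)]
          simp only [mul_assoc]
      _ = int fun u => int (fun x => bax γ z x * lam (b 0) x u) * psi n (fun j => b (j + 1)) u := by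
          rw [int_swap (by unfold Function.uncurry; fun_prop)]
          exact int_congr fun u => int_mul_const _ (by fun_prop)
      _ = gam (γ + b 0) * int fun u => int fun v =>
            lam (b 0) z v * (bax γ v u * psi n (fun j => b (j + 1)) u) := by
          rw [← int_const_mul _ (by
            refine measurable_int ?_
            unfold Function.uncurry; fun_prop)]
          refine int_congr fun u => ?_
          rw [int_bax_mul_lam, mul_assoc, ← int_mul_const _ (by fun_prop)]
          simp only [mul_assoc]
      _ = gam (γ + b 0) * int fun v =>
            lam (b 0) z v * int fun u => bax γ v u * psi n (fun j => b (j + 1)) u := by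
          rw [int_swap (by unfold Function.uncurry; fun_prop)]
          congr 1
          exact int_congr fun v => int_const_mul _ (by fun_prop)
      _ = _ := by
          simp only [ih, Finset.prod_range_succ', psi_succ]
          simp only [mul_left_comm _ (∏ k ∈ Finset.range n, _)]
          rw [int_const_mul _ (by fun_prop)]
          rw [← mul_assoc, mul_comm (gam _)]

/-- The exponential of the last coordinate of a tuple, zero for the empty tuple. -/
def lastExp : {m : ℕ} → (Fin m → ℝ) → ℝ
  | 0, _ => 0
  | m + 1, z => Real.exp (z (Fin.last m))

lemma measurable_lastExp {m : ℕ} : Measurable (lastExp (m := m)) := by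
  cases m with
  | zero => exact measurable_const
  | succ m => unfold lastExp; fun_prop

@[fun_prop] lemma Measurable.lastExp {Z : Type*} [MeasurableSpace Z] {m : ℕ}
    {x : Z → Fin m → ℝ} (hx : Measurable x) : Measurable fun z => _root_.lastExp (x z) :=
  measurable_lastExp.comp hx

namespace Maj

variable {X Y Z : Type*} [MeasureSpace X] [MeasureSpace Y] [MeasureSpace Z]
  [SFinite (volume : Measure X)] [SFinite (volume : Measure Y)] [SFinite (volume : Measure Z)]

lemma int_rotate {F : X → Y → Z → Maj}
    (hF : Measurable fun p : X × Y × Z => F p.1 p.2.1 p.2.2) :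
    int (fun x => int fun y => int fun z => F x y z) =
      int fun z => int fun x => int fun y => F x y z := by
  have h1 : ∀ x, Measurable (Function.uncurry (F x)) := fun x =>
    hF.comp (measurable_const.prodMk measurable_id)
  have h2 : Measurable fun q : (X × Z) × Y => F q.1.1 q.2 q.1.2 :=
    hF.comp (by fun_prop : Measurable fun q : (X × Z) × Y => (q.1.1, q.2, q.1.2))
  calc _ = int fun x => int fun z => int fun y => F x y z := int_congr fun x => int_swap (h1 x)
    _ = _ := int_swap (f := fun x z => int fun y => F x y z)
      (measurable_int (f := fun (p : X × Z) y => F p.1 y p.2) h2)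

end Maj

/-- The Mellin transform of the product of Whittaker functions on `GL_{m+1}` and `GL_m`. -/
def jInt (m : ℕ) (a b : ℕ → ℂ) (w : ℂ) : Maj :=
  int fun y : ℝ => int fun z : Fin m → ℝ => psi (m + 1) a (Fin.snoc z y) *
    (psi m b z * E (-(Real.pi * (lastExp z + Real.exp (-y)) : ℝ) - w / 2 * (y : ℂ)))

/-- An auxiliary integral of the product of two Whittaker functions on `GL_{m+1}`. -/
def kInt (m : ℕ) (a b : ℕ → ℂ) (w : ℂ) : Maj :=
  int fun y : ℝ => int fun z : Fin m → ℝ => psi (m + 1) a (Fin.snoc z y) *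
    (psi (m + 1) b (Fin.snoc z (y - Real.log (1 + Real.exp y))) *
      E (-w / 2 * (Real.log (1 + Real.exp y) : ℂ)))

lemma exp_log_one_add_exp (t : ℝ) : Real.exp (Real.log (1 + Real.exp t)) = 1 + Real.exp t :=
  Real.exp_log (by positivity)

lemma lam_snoc_snoc {m : ℕ} (a w : ℂ) (z : Fin (m + 1) → ℝ) (u : Fin m → ℝ) (t s : ℝ) :
    let L := Real.log (1 + Real.exp t)
    lam a (Fin.snoc z (L - s)) (Fin.snoc u t) *
        E (-(Real.pi * (lastExp z + Real.exp (-(L - s))) : ℝ) - w / 2 * ((L - s : ℝ) : ℂ)) =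
      E (-(Real.pi * Real.exp s : ℝ) + (w - a) / 2 * (s : ℂ)) *
        (E (-w / 2 * (L : ℂ)) * bax a (Fin.snoc u (t - L)) z) := by
  intro L
  have hL : Real.exp L = 1 + Real.exp t := exp_log_one_add_exp t
  have hpot : lamPot (Fin.snoc z (L - s) : Fin (m + 2) → ℝ) (Fin.snoc u t) +
      (lastExp z + Real.exp (-(L - s))) =
      Real.exp s + baxPot (Fin.snoc u (t - L) : Fin (m + 1) → ℝ) z := by
    have e1 : Real.exp (z (Fin.last m) - (t - L)) =
        Real.exp (z (Fin.last m) - t) + Real.exp (z (Fin.last m)) := by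
      rw [show z (Fin.last m) - (t - L) = (z (Fin.last m) - t) + L by ring, Real.exp_add, hL,
        mul_add, mul_one, ← Real.exp_add]
      ring_nf
    have e2 : Real.exp s = Real.exp (t - (L - s)) + Real.exp (-(L - s)) := by
      rw [show t - (L - s) = -(L - s) + t by ring, Real.exp_add, ← mul_add_one, add_comm _ (1 : ℝ),
        ← hL, ← Real.exp_add]
      ring_nf
    rw [baxPot_succ, lamPot, lastExp, Finset.sum_add_distrib, Fin.sum_univ_castSucc,
      Fin.sum_univ_castSucc, Fin.sum_univ_castSucc]
    simp only [Fin.snoc_castSucc, Fin.snoc_last, Fin.succ_last, Fin.succ_castSucc]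
    rw [e1, e2]
    ring
  simp only [bax, lam, ← E_add]
  congr 1
  have hp := congrArg (fun r : ℝ => (r : ℂ)) hpot
  simp only [Fin.sum_univ_castSucc, Fin.snoc_castSucc, Fin.snoc_last]
  push_cast at hp ⊢
  linear_combination (-(Real.pi : ℂ)) * hp

lemma mul_rearrange {M : Type*} [CommMonoid M] {A B C D F : M} (h : A * B = C * (D * F))
    (P Q : M) : A * P * (Q * B) = C * (P * D * (F * Q)) := by
  calc A * P * (Q * B) = A * B * (P * Q) := by simp only [mul_comm, mul_left_comm]
    _ = _ := by rw [h]; simp only [mul_comm, mul_left_comm]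

lemma jInt_succ (m : ℕ) (a b : ℕ → ℂ) (w : ℂ) :
    jInt (m + 1) a b w = (∏ k ∈ Finset.range (m + 1), gam (a 0 + b k)) * gam (w - a 0) *
      kInt m (fun j => a (j + 1)) b w := by
  have step : ∀ (u : Fin m → ℝ) (t : ℝ),
      int (fun y : ℝ => int fun z : Fin (m + 1) → ℝ =>
        lam (a 0) (Fin.snoc z y) (Fin.snoc u t) * psi (m + 1) (fun j => a (j + 1)) (Fin.snoc u t) *
        (psi (m + 1) b z *
          E (-(Real.pi * (lastExp z + Real.exp (-y)) : ℝ) - w / 2 * (y : ℂ)))) =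
      (∏ k ∈ Finset.range (m + 1), gam (a 0 + b k)) * gam (w - a 0) *
      (psi (m + 1) (fun j => a (j + 1)) (Fin.snoc u t) *
        (psi (m + 1) b (Fin.snoc u (t - Real.log (1 + Real.exp t))) *
          E (-w / 2 * (Real.log (1 + Real.exp t) : ℂ)))) := by
    intro u t
    set L := Real.log (1 + Real.exp t) with hL
    rw [← int_const_sub_real L]
    calc _ = int fun s : ℝ => E (-(Real.pi * Real.exp s : ℝ) + (w - a 0) / 2 * (s : ℂ)) *
          (psi (m + 1) (fun j => a (j + 1)) (Fin.snoc u t) * E (-w / 2 * (L : ℂ)) *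
          int fun z : Fin (m + 1) → ℝ => bax (a 0) (Fin.snoc u (t - L)) z * psi (m + 1) b z) := by
          refine int_congr fun s => ?_
          rw [← int_const_mul _ (by fun_prop), ← int_const_mul _ (by fun_prop)]
          refine int_congr fun z => ?_
          have h := lam_snoc_snoc (a 0) w z u t s
          simp only [← hL] at h
          exact mul_rearrange h _ _
      _ = _ := by
          rw [int_mul_const _ (by fun_prop), ← gam, int_bax_mul_psi]
          simp only [mul_assoc, mul_comm, mul_left_comm]
  calc jInt (m + 1) a b w = int fun y : ℝ => int fun z : Fin (m + 1) → ℝ =>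
        int fun u : Fin (m + 1) → ℝ =>
        lam (a 0) (Fin.snoc z y) u * psi (m + 1) (fun j => a (j + 1)) u *
        (psi (m + 1) b z *
          E (-(Real.pi * (lastExp z + Real.exp (-y)) : ℝ) - w / 2 * (y : ℂ))) := by
        refine int_congr fun y => int_congr fun z => ?_
        rw [psi_succ, ← int_mul_const _ (by fun_prop)]
    _ = _ := by
        rw [int_rotate (by fun_prop), int_snoc]
        · simp only [step]
          rw [kInt, ← int_const_mul]
          · refine int_congr fun t => ?_
            rw [← int_const_mul _ (by fun_prop)]
          · refine measurable_int ?_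
            unfold Function.uncurry; fun_prop
        · refine measurable_int ?_
          refine measurable_int ?_
          unfold Function.uncurry; fun_prop

lemma bax_snoc_snoc {m : ℕ} (b w : ℂ) (x z : Fin m → ℝ) (t s : ℝ) :
    let L := Real.log (1 + Real.exp t)
    bax b (Fin.snoc x (L - s)) (Fin.snoc z t : Fin (m + 1) → ℝ) *
        E (-(Real.pi * (lastExp x + Real.exp (-(L - s))) : ℝ) - w / 2 * ((L - s : ℝ) : ℂ)) =
      E (-(Real.pi * Real.exp s : ℝ) + (w + b) / 2 * (s : ℂ)) *
        (E (-w / 2 * (L : ℂ)) * lam b (Fin.snoc z (t - L)) x) := by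
  intro L
  have hL : Real.exp L = 1 + Real.exp t := exp_log_one_add_exp t
  have hpot : baxPot (Fin.snoc x (L - s) : Fin (m + 1) → ℝ) (Fin.snoc z t) +
      (lastExp x + Real.exp (-(L - s))) =
      Real.exp s + lamPot (Fin.snoc z (t - L) : Fin (m + 1) → ℝ) x := by
    have e2 : Real.exp s = Real.exp (t - (L - s)) + Real.exp (-(L - s)) := by
      rw [show t - (L - s) = -(L - s) + t by ring, Real.exp_add, ← mul_add_one, add_comm _ (1 : ℝ),
        ← hL, ← Real.exp_add]
      ring_nf
    have e1 : ∑ j : Fin m, Real.exp (x j - (Fin.snoc z (t - L) : Fin (m + 1) → ℝ) j.succ) =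
        ∑ j : Fin m, Real.exp (x j - (Fin.snoc z t : Fin (m + 1) → ℝ) j.succ) + lastExp x := by
      cases m with
      | zero => simp [lastExp]
      | succ m =>
        rw [lastExp, Fin.sum_univ_castSucc, Fin.sum_univ_castSucc]
        simp only [Fin.snoc_castSucc, Fin.snoc_last, Fin.succ_last, Fin.succ_castSucc]
        rw [show x (Fin.last m) - (t - L) = (x (Fin.last m) - t) + L by ring, Real.exp_add, hL,
          mul_add, mul_one, ← Real.exp_add]
        ring_nf
    rw [baxPot_succ, lamPot, Finset.sum_add_distrib, e1, Fin.sum_univ_castSucc]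
    simp only [Fin.snoc_castSucc, Fin.snoc_last]
    rw [e2]
    ring
  simp only [bax, lam, ← E_add]
  congr 1
  have hp := congrArg (fun r : ℝ => (r : ℂ)) hpot
  simp only [Fin.sum_univ_castSucc, Fin.snoc_castSucc, Fin.snoc_last]
  push_cast at hp ⊢
  linear_combination (-(Real.pi : ℂ)) * hp

lemma kInt_mul_gam (m : ℕ) (a b : ℕ → ℂ) (w : ℂ) :
    kInt m a b w * gam (w + b 0) = (∏ k ∈ Finset.range (m + 1), gam (b 0 + a k)) *
      jInt m a (fun j => b (j + 1)) w := by
  have step : ∀ (z : Fin m → ℝ) (t : ℝ),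
      int (fun y : ℝ => int fun x : Fin m → ℝ =>
        bax (b 0) (Fin.snoc x y) (Fin.snoc z t : Fin (m + 1) → ℝ) * psi (m + 1) a (Fin.snoc z t) *
        (psi m (fun j => b (j + 1)) x *
          E (-(Real.pi * (lastExp x + Real.exp (-y)) : ℝ) - w / 2 * (y : ℂ)))) =
      psi (m + 1) a (Fin.snoc z t) *
        (psi (m + 1) b (Fin.snoc z (t - Real.log (1 + Real.exp t))) *
          E (-w / 2 * (Real.log (1 + Real.exp t) : ℂ))) * gam (w + b 0) := by
    intro z t
    set L := Real.log (1 + Real.exp t) with hL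
    rw [← int_const_sub_real L]
    calc _ = int fun s : ℝ => E (-(Real.pi * Real.exp s : ℝ) + (w + b 0) / 2 * (s : ℂ)) *
          (psi (m + 1) a (Fin.snoc z t) * E (-w / 2 * (L : ℂ)) *
          int fun x : Fin m → ℝ => lam (b 0) (Fin.snoc z (t - L)) x *
            psi m (fun j => b (j + 1)) x) := by
          refine int_congr fun s => ?_
          rw [← int_const_mul _ (by fun_prop), ← int_const_mul _ (by fun_prop)]
          refine int_congr fun x => ?_
          have h := bax_snoc_snoc (b 0) w x z t s
          simp only [← hL] at h
          exact mul_rearrange h _ _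
      _ = _ := by
          rw [int_mul_const _ (by fun_prop), ← gam, ← psi_succ]
          simp only [mul_comm, mul_left_comm]
  symm
  calc (∏ k ∈ Finset.range (m + 1), gam (b 0 + a k)) * jInt m a (fun j => b (j + 1)) w
      = int fun y : ℝ => int fun x : Fin m → ℝ => int fun u : Fin (m + 1) → ℝ =>
        bax (b 0) (Fin.snoc x y) u * psi (m + 1) a u *
        (psi m (fun j => b (j + 1)) x *
          E (-(Real.pi * (lastExp x + Real.exp (-y)) : ℝ) - w / 2 * (y : ℂ))) := by
        rw [jInt, ← int_const_mul]
        · refine int_congr fun y => ?_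
          rw [← int_const_mul _ (by fun_prop)]
          refine int_congr fun x => ?_
          rw [int_mul_const _ (by fun_prop), int_bax_mul_psi, mul_assoc]
        · refine measurable_int ?_
          unfold Function.uncurry; fun_prop
    _ = _ := by
        rw [int_rotate (by fun_prop), int_snoc]
        · simp only [step]
          rw [kInt, ← int_mul_const]
          · refine int_congr fun t => ?_
            rw [← int_mul_const _ (by fun_prop)]
          · refine measurable_int ?_
            unfold Function.uncurry; fun_prop
        · refine measurable_int ?_
          refine measurable_int ?_
          unfold Function.uncurry; fun_prop

lemma psi_one (a : ℕ → ℂ) (x : Fin 1 → ℝ) : psi 1 a x = E (a 0 / 2 * (x 0 : ℂ)) := by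
  rw [psi_succ, int_fin_zero]
  simp [psi, lam, lamPot]

/-- Evaluation of the Mellin transform of the product of Whittaker functions on `GL_{m+1}` and
`GL_m`. -/
lemma jInt_mul_prod_gam : ∀ (m : ℕ) (a b : ℕ → ℂ) (w : ℂ),
    jInt m a b w * ∏ k ∈ Finset.range m, gam (w + b k) =
      (∏ j ∈ Finset.range (m + 1), ∏ k ∈ Finset.range m, gam (a j + b k)) *
        ∏ j ∈ Finset.range (m + 1), gam (w - a j)
  | 0, a, b, w => by
    simp only [Finset.range_zero, Finset.prod_empty, mul_one, Finset.prod_const_one, one_mul,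
      zero_add, Finset.prod_range_one]
    rw [jInt, gam, ← int_const_sub_real 0]
    refine int_congr fun y => ?_
    rw [int_fin_zero, psi_one, psi, one_mul, ← E_add]
    have : (Fin.snoc (Fin.elim0 : Fin 0 → ℝ) (0 - y) : Fin 1 → ℝ) 0 = 0 - y :=
      Fin.snoc_last (n := 0) (α := fun _ => ℝ) (0 - y) Fin.elim0
    rw [this]
    congr 1
    simp only [lastExp]
    push_cast
    ring_nf
  | m + 1, a, b, w => by
    have ih := jInt_mul_prod_gam m (fun j => a (j + 1)) (fun j => b (j + 1)) w
    have hk := kInt_mul_gam m (fun j => a (j + 1)) b w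
    rw [jInt_succ]
    rw [Finset.prod_range_succ' (fun k => gam (w + b k)) m, mul_comm (∏ k ∈ Finset.range m, _),
      mul_assoc, ← mul_assoc (kInt _ _ _ _), hk, mul_assoc (∏ k ∈ Finset.range (m + 1), _) (jInt _ _ _ _), ih]
    rw [Finset.prod_range_succ' (fun j => ∏ k ∈ Finset.range (m + 1), gam (a j + b k)),
      Finset.prod_range_succ' (fun j => gam (w - a j)),
      Finset.prod_congr rfl fun j _ =>
        Finset.prod_range_succ' (fun k => gam (a (j + 1) + b k)) m, Finset.prod_mul_distrib]
    simp only [add_comm (b 0)]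
    simp only [mul_assoc, mul_comm, mul_left_comm]

/-- The integral of the product of Whittaker functions on `GL_{m+2}` and `GL_m`. -/
def oInt (m : ℕ) (a b : ℕ → ℂ) : Maj :=
  int fun x : Fin m → ℝ =>
    psi (m + 2) a (Fin.snoc (Fin.snoc x 0 : Fin (m + 1) → ℝ) 0) * psi m b x

/-- The part of the integrand of `jInt` that does not depend on the complex parameter. -/
def jKer (m : ℕ) (a b : ℕ → ℂ) (p : ℝ × (Fin m → ℝ)) : Maj :=
  psi (m + 1) a (Fin.snoc p.2 p.1) *
    (psi m b p.2 * E (-(Real.pi * (lastExp p.2 + Real.exp (-p.1)) : ℝ)))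

@[fun_prop] lemma measurable_jKer (m : ℕ) (a b : ℕ → ℂ) : Measurable (jKer m a b) := by
  unfold jKer; fun_prop

lemma jInt_eq (m : ℕ) (a b : ℕ → ℂ) (w : ℂ) :
    jInt m a b w = int fun p => jKer m a b p * E (-(w / 2 * (p.1 : ℂ))) := by
  rw [int_prod (by fun_prop)]
  refine int_congr fun y => int_congr fun z => ?_
  simp only [jKer, mul_assoc, ← E_add, ← sub_eq_add_neg]

lemma lam_snoc_zero {m : ℕ} (a : ℂ) (x z : Fin m → ℝ) (y : ℝ) :
    lam a (Fin.snoc (Fin.snoc x 0 : Fin (m + 1) → ℝ) 0) (Fin.snoc z y : Fin (m + 1) → ℝ) =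
      bax a z x * (E (-(Real.pi * (lastExp z + Real.exp (-y)) : ℝ)) *
        E (-(Real.pi * Real.exp y : ℝ) - a / 2 * (y : ℂ))) := by
  have hpot : lamPot (Fin.snoc (Fin.snoc x 0 : Fin (m + 1) → ℝ) 0)
      (Fin.snoc z y : Fin (m + 1) → ℝ) =
      baxPot z x + (lastExp z + Real.exp (-y)) + Real.exp y := by
    cases m with
    | zero => simp [lamPot, baxPot, lastExp, Fin.snoc]
    | succ m =>
      rw [baxPot_succ, lamPot, lastExp, Finset.sum_add_distrib]
      simp only [Fin.sum_univ_castSucc, Fin.snoc_castSucc, Fin.snoc_last, Fin.succ_last, Fin.succ_castSucc, sub_zero,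
        zero_sub]
      ring
  simp only [bax, lam, ← E_add]
  congr 1
  have hp := congrArg (fun r : ℝ => (r : ℂ)) hpot
  simp only [Fin.sum_univ_castSucc, Fin.snoc_castSucc, Fin.snoc_last]
  push_cast at hp ⊢
  linear_combination (-(Real.pi : ℂ)) * hp

lemma oInt_eq (m : ℕ) (a b : ℕ → ℂ) :
    oInt m a b = (∏ k ∈ Finset.range m, gam (a 0 + b k)) *
      int fun p => jKer m (fun j => a (j + 1)) b p *
        E (-(Real.pi * Real.exp p.1 : ℝ) - a 0 / 2 * (p.1 : ℂ)) := by
  calc oInt m a b = int fun x : Fin m → ℝ => int fun u : Fin (m + 1) → ℝ =>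
        lam (a 0) (Fin.snoc (Fin.snoc x 0 : Fin (m + 1) → ℝ) 0) u *
          psi (m + 1) (fun j => a (j + 1)) u * psi m b x := by
        refine int_congr fun x => ?_
        rw [psi_succ, ← int_mul_const _ (by fun_prop)]
    _ = int fun y : ℝ => int fun z : Fin m → ℝ => int fun x : Fin m → ℝ =>
        E (-(Real.pi * (lastExp z + Real.exp (-y)) : ℝ)) *
        E (-(Real.pi * Real.exp y : ℝ) - a 0 / 2 * (y : ℂ)) *
          psi (m + 1) (fun j => a (j + 1)) (Fin.snoc z y) * (bax (a 0) z x * psi m b x) := by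
        rw [int_swap (by unfold Function.uncurry; fun_prop), int_snoc]
        · refine int_congr fun y => int_congr fun z => int_congr fun x => ?_
          rw [lam_snoc_zero]
          simp only [mul_assoc, mul_left_comm]
        · refine measurable_int ?_
          unfold Function.uncurry; fun_prop
    _ = _ := by
        rw [← int_const_mul _ (by fun_prop), int_prod (by fun_prop)]
        refine int_congr fun y => int_congr fun z => ?_
        rw [int_const_mul _ (by fun_prop), int_bax_mul_psi]
        simp only [jKer, mul_assoc, mul_comm, mul_left_comm]

lemma GammaR_ne_zero {s : ℂ} (hs : 0 < s.re) : GammaR s ≠ 0 :=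
  mul_ne_zero (by simp [Complex.cpow_eq_zero_iff, Real.pi_ne_zero])
    (Complex.Gamma_ne_zero_of_re_pos (by simpa using hs))

/-- Change of variables `y = exp x`. -/
lemma integral_Ioi_eq_integral_exp (F : ℝ → ℂ) :
    ∫ y in Set.Ioi (0 : ℝ), F y = ∫ x : ℝ, (Real.exp x : ℂ) * F (Real.exp x) := by
  have h := integral_image_eq_integral_abs_deriv_smul (s := Set.univ) (f := Real.exp)
    (f' := Real.exp) MeasurableSet.univ (fun x _ => (Real.hasDerivAt_exp x).hasDerivWithinAt)
    Real.exp_injective.injOn F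
  rw [Set.image_univ, Real.range_exp, setIntegral_univ] at h
  simpa [abs_of_pos (Real.exp_pos _)] using h

lemma integral_exp_eq_GammaR {s : ℂ} (hs : 0 < s.re) :
    ∫ x : ℝ, Complex.exp (-(Real.pi * Real.exp x : ℝ) + s / 2 * (x : ℂ)) = GammaR s := by
  have h := Complex.integral_cpow_mul_exp_neg_mul_Ioi (a := s / 2) (r := Real.pi)
    (by simpa using hs) (by simpa using Real.pi_pos)
  rw [integral_Ioi_eq_integral_exp] at h
  rw [one_div, Complex.inv_cpow _ _ (by
    rw [Complex.arg_ofReal_of_nonneg Real.pi_pos.le]; exact Real.pi_ne_zero.symm)] at h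
  rw [GammaR, show -s / 2 = -(s / 2) by ring, Complex.cpow_neg, ← h]
  refine integral_congr_ae (ae_of_all _ fun x => ?_)
  simp only
  rw [Complex.cpow_def_of_ne_zero (by simp), ← Complex.ofReal_log (Real.exp_pos x).le,
    Real.log_exp, Complex.ofReal_exp, ← Complex.exp_add, ← Complex.exp_add]
  congr 1
  push_cast
  ring

lemma integrable_exp_gam {s : ℂ} (hs : 0 < s.re) :
    Integrable fun x : ℝ => Complex.exp (-(Real.pi * Real.exp x : ℝ) + s / 2 * (x : ℂ)) :=
  Integrable.of_integral_ne_zero (by rw [integral_exp_eq_GammaR hs]; exact GammaR_ne_zero hs)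

lemma maj_gam_ne_top {s : ℂ} (hs : 0 < s.re) : (gam s).maj ≠ ∞ := by
  rw [gam, maj_int]
  exact (integrable_exp_gam hs).2.ne

lemma val_gam {s : ℂ} (hs : 0 < s.re) : (gam s).val = GammaR s := by
  rw [gam, val_int (by simpa [gam] using maj_gam_ne_top hs)]
  exact integral_exp_eq_GammaR hs

lemma maj_gam_ne_zero {s : ℂ} (hs : 0 < s.re) : (gam s).maj ≠ 0 := fun h => by
  have := (gam s).enorm_val_le
  rw [h, val_gam hs] at this
  exact GammaR_ne_zero hs (by simpa using this)

lemma maj_jInt_ne_top {m : ℕ} {a b : ℕ → ℂ} {w : ℂ}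
    (h1 : ∀ j < m + 1, ∀ k < m, 0 < (a j + b k).re) (h2 : ∀ j < m + 1, 0 < (w - a j).re)
    (h3 : ∀ k < m, 0 < (w + b k).re) : (jInt m a b w).maj ≠ ∞ := by
  intro h
  have := congrArg Maj.maj (jInt_mul_prod_gam m a b w)
  simp only [maj_mul, maj_prod, h] at this
  rw [ENNReal.top_mul] at this
  · refine ENNReal.mul_ne_top ?_ ?_ this.symm
    · exact ENNReal.prod_ne_top fun j hj => ENNReal.prod_ne_top fun k hk =>
        maj_gam_ne_top (h1 j (by simpa using hj) k (by simpa using hk))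
    · exact ENNReal.prod_ne_top fun j hj => maj_gam_ne_top (h2 j (by simpa using hj))
  · exact Finset.prod_ne_zero_iff.2 fun k hk => maj_gam_ne_zero (h3 k (by simpa using hk))

lemma val_jInt {m : ℕ} {a b : ℕ → ℂ} {w : ℂ}
    (h1 : ∀ j < m + 1, ∀ k < m, 0 < (a j + b k).re) (h2 : ∀ j < m + 1, 0 < (w - a j).re)
    (h3 : ∀ k < m, 0 < (w + b k).re) :
    (jInt m a b w).val = (∏ j ∈ Finset.range (m + 1), ∏ k ∈ Finset.range m, GammaR (a j + b k)) *
      ((∏ j ∈ Finset.range (m + 1), GammaR (w - a j)) / ∏ k ∈ Finset.range m, GammaR (w + b k)) := by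
  have h := congrArg Maj.val (jInt_mul_prod_gam m a b w)
  simp only [val_mul, val_prod] at h
  rw [Finset.prod_congr rfl fun k hk => val_gam (h3 k (by simpa using hk)),
    Finset.prod_congr rfl fun j hj => val_gam (h2 j (by simpa using hj)),
    Finset.prod_congr rfl fun j hj => Finset.prod_congr rfl fun k hk =>
      val_gam (h1 j (by simpa using hj) k (by simpa using hk))] at h
  rw [mul_div_assoc', eq_div_iff, h]
  exact Finset.prod_ne_zero_iff.2 fun k hk => GammaR_ne_zero (h3 k (by simpa using hk))

lemma norm_GammaR_le {s : ℂ} (hs : 0 < s.re) :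
    ‖GammaR s‖ ≤ ∫ x : ℝ, Real.exp (-(Real.pi * Real.exp x) + s.re / 2 * x) := by
  rw [← integral_exp_eq_GammaR hs]
  refine (norm_integral_le_integral_norm _).trans (le_of_eq ?_)
  refine integral_congr_ae (ae_of_all _ fun x => ?_)
  simp only [Complex.norm_exp]
  simp [-Complex.ofReal_exp]

lemma GammaR_add_two {s : ℂ} (hs : s ≠ 0) :
    GammaR (s + 2) = GammaR s * (s / (2 * Real.pi)) := by
  have hpi : (Real.pi : ℂ) ≠ 0 := by exact_mod_cast Real.pi_ne_zero
  rw [GammaR, GammaR, show (s + 2) / 2 = s / 2 + 1 by ring, Complex.Gamma_add_one _ (by simpa),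
    show -(s + 2) / 2 = -s / 2 - 1 by ring, Complex.cpow_sub _ _ hpi, Complex.cpow_one]
  field_simp

lemma continuousAt_GammaR {s : ℂ} (hs : 0 < s.re) : ContinuousAt GammaR s := by
  have hpi : (Real.pi : ℂ) ≠ 0 := by exact_mod_cast Real.pi_ne_zero
  have h : ContinuousAt Complex.Gamma (s / 2) := by
    refine (Complex.differentiableAt_Gamma _ fun m h => ?_).continuousAt
    have := congrArg Complex.re h
    simp at this
    have hm : (0 : ℝ) ≤ m := m.cast_nonneg
    linarith
  unfold GammaR
  refine ContinuousAt.mul ?_ (h.comp (f := fun s : ℂ => s / 2) (by fun_prop))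
  exact ContinuousAt.const_cpow (by fun_prop) (Or.inl hpi)

lemma integrable_GammaR {c : ℝ} (hc : 0 < c) :
    Integrable fun t : ℝ => GammaR (c + t * Complex.I) := by
  have hre : ∀ t : ℝ, ((c : ℂ) + t * Complex.I).re = c := fun t => by simp
  set K := ∫ x : ℝ, Real.exp (-(Real.pi * Real.exp x) + (c + 4) / 2 * x)
  have hK0 : 0 ≤ K := integral_nonneg fun x => (Real.exp_pos _).le
  set k := min (c ^ 2) 1 with hk
  have hk0 : 0 < k := lt_min (by positivity) one_pos
  have hcont : Continuous fun t : ℝ => GammaR (c + t * Complex.I) :=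
    continuous_iff_continuousAt.2 fun t =>
      (continuousAt_GammaR (by rwa [hre])).comp
        (f := fun t : ℝ => (c : ℂ) + t * Complex.I) (by fun_prop)
  refine (integrable_inv_one_add_sq.const_mul (4 * Real.pi ^ 2 * K / k)).mono'
    hcont.aestronglyMeasurable (ae_of_all _ fun t => ?_)
  set s : ℂ := c + t * Complex.I with hs
  have hsre : s.re = c := hre t
  have hs0 : s ≠ 0 := fun h => by rw [h] at hsre; simp at hsre; linarith
  have hs2 : s + 2 ≠ 0 := fun h => by
    have := congrArg Complex.re h
    simp [hsre] at this; linarith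
  have h4 : ‖GammaR (s + 2 + 2)‖ ≤ K := by
    refine (norm_GammaR_le (by simp [hsre]; linarith)).trans (le_of_eq ?_)
    simp only [K]
    congr 1
    ext x
    have : (s + 2 + 2).re = c + 4 := by simp [hsre]; ring
    rw [this]
  rw [GammaR_add_two hs2, GammaR_add_two hs0] at h4
  have hn : k * (1 + t ^ 2) ≤ ‖s‖ * ‖s + 2‖ := by
    have h1 : k * (1 + t ^ 2) ≤ ‖s‖ ^ 2 := by
      rw [← Complex.normSq_eq_norm_sq, Complex.normSq_apply, hsre]
      have : s.im = t := by simp [hs]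
      rw [this]
      nlinarith [min_le_left (c ^ 2) 1, min_le_right (c ^ 2) 1, sq_nonneg t]
    have h2 : ‖s‖ ≤ ‖s + 2‖ := by
      rw [← abs_of_nonneg (norm_nonneg s), ← abs_of_nonneg (norm_nonneg (s + 2)), ← sq_le_sq,
        ← Complex.normSq_eq_norm_sq, ← Complex.normSq_eq_norm_sq, Complex.normSq_apply,
        Complex.normSq_apply]
      simp [hsre]; nlinarith
    nlinarith [norm_nonneg s]
  simp only [norm_mul, norm_div, Complex.norm_real, Complex.norm_ofNat,
    Real.norm_eq_abs, abs_of_pos Real.pi_pos] at h4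
  have hpi := Real.pi_pos
  have h5 : ‖GammaR s‖ * (‖s‖ * ‖s + 2‖) ≤ 4 * Real.pi ^ 2 * K := by
    have : ‖GammaR s‖ * (‖s‖ / (2 * Real.pi)) * (‖s + 2‖ / (2 * Real.pi)) =
      ‖GammaR s‖ * (‖s‖ * ‖s + 2‖) / (4 * Real.pi ^ 2) := by field_simp; ring
    rw [this, div_le_iff₀ (by positivity)] at h4
    linarith
  rw [← div_eq_mul_inv, div_div, le_div_iff₀ (by positivity)]
  exact (mul_le_mul_of_nonneg_left hn (norm_nonneg _)).trans h5

lemma mellin_exp_eq_GammaR {s : ℂ} (hs : 0 < s.re) :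
    mellin (fun x : ℝ => Complex.exp (-(Real.pi * x : ℝ))) (s / 2) = GammaR s := by
  rw [mellin, integral_Ioi_eq_integral_exp, ← integral_exp_eq_GammaR hs]
  refine integral_congr_ae (ae_of_all _ fun x => ?_)
  simp only [smul_eq_mul]
  rw [Complex.cpow_def_of_ne_zero (by simp), ← Complex.ofReal_log (Real.exp_pos x).le,
    Real.log_exp, Complex.ofReal_exp, ← Complex.exp_add, ← Complex.exp_add]
  congr 1
  push_cast
  ring

/-- Mellin inversion for the exponential function. -/
lemma integral_GammaR_mul_exp {c : ℝ} (hc : 0 < c) (y : ℝ) :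
    ∫ t : ℝ, GammaR (c + t * Complex.I) * Complex.exp (-((c + t * Complex.I) / 2 * (y : ℂ))) =
      4 * Real.pi * Complex.exp (-(Real.pi * Real.exp y : ℝ)) := by
  have hhalf : ∀ t : ℝ, ((c / 2 : ℝ) : ℂ) + t * Complex.I =
      ((c : ℂ) + ((2 * t : ℝ) : ℂ) * Complex.I) / 2 := fun t => by push_cast; ring
  have hm : ∀ t : ℝ, mellin (fun x : ℝ => Complex.exp (-(Real.pi * x : ℝ)))
      ((c / 2 : ℝ) + t * Complex.I) = GammaR (c + (2 * t : ℝ) * Complex.I) := fun t => by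
    rw [hhalf, mellin_exp_eq_GammaR (by simpa using hc)]
  have h := mellinInv_mellin_eq (c / 2) (fun x : ℝ => Complex.exp (-(Real.pi * x : ℝ)))
    (Real.exp_pos y) ?_ ?_ (by fun_prop)
  · rw [mellinInv] at h
    simp only [hm] at h
    have h2 : ∀ t : ℝ, ((Real.exp y : ℝ) : ℂ) ^ (-(((c / 2 : ℝ) : ℂ) + t * Complex.I)) •
        GammaR (c + (2 * t : ℝ) * Complex.I) = (fun t : ℝ => GammaR (c + t * Complex.I) *
          Complex.exp (-((c + t * Complex.I) / 2 * (y : ℂ)))) (2 * t) := fun t => by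
      rw [hhalf, Complex.cpow_def_of_ne_zero (by simp), ← Complex.ofReal_log (Real.exp_pos y).le,
        Real.log_exp, smul_eq_mul, mul_comm]
      ring_nf
    simp only [h2] at h
    rw [Measure.integral_comp_mul_left (fun t : ℝ => GammaR (c + t * Complex.I) *
          Complex.exp (-((c + t * Complex.I) / 2 * (y : ℂ)))), abs_of_pos (by norm_num)] at h
    simp only [Complex.real_smul] at h
    rw [← h]
    generalize ∫ t : ℝ, GammaR (c + t * Complex.I) *
      Complex.exp (-((c + t * Complex.I) / 2 * (y : ℂ))) = J
    have hpi : (Real.pi : ℂ) ≠ 0 := by exact_mod_cast Real.pi_ne_zero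
    push_cast
    field_simp
    norm_num
  · refine Integrable.of_integral_ne_zero ?_
    have := mellin_exp_eq_GammaR (s := c) (by simpa using hc)
    rw [mellin] at this
    rw [Complex.ofReal_div, Complex.ofReal_ofNat, this]
    exact GammaR_ne_zero (by simpa using hc)
  · unfold VerticalIntegrable
    simp only [hm]
    exact (integrable_GammaR hc).comp_mul_left' two_ne_zero

lemma integral_GammaR_sub_mul_exp {c : ℝ} (hc : 0 < c) {a : ℂ} (ha : a.re = 0) (y : ℝ) :
    ∫ t : ℝ, GammaR (c + t * Complex.I - a) * Complex.exp (-((c + t * Complex.I) / 2 * (y : ℂ))) =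
      4 * Real.pi * Complex.exp (-(Real.pi * Real.exp y : ℝ) - a / 2 * (y : ℂ)) := by
  have haI : a = a.im * Complex.I := by
    apply Complex.ext <;> simp [ha]
  have h := integral_sub_right_eq_self (μ := volume) (fun t : ℝ => GammaR (c + t * Complex.I) *
    Complex.exp (-((c + t * Complex.I) / 2 * (y : ℂ)))) a.im
  rw [integral_GammaR_mul_exp hc] at h
  rw [sub_eq_add_neg, Complex.exp_add, ← mul_assoc, ← h, ← integral_mul_const]
  refine integral_congr_ae (ae_of_all _ fun t => ?_)
  simp only
  rw [mul_assoc, ← Complex.exp_add]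
  congr 2
  · push_cast; linear_combination -haI
  · push_cast; linear_combination ((y : ℂ) / 2) * haI

lemma integrable_GammaR_sub {c : ℝ} (hc : 0 < c) {a : ℂ} (ha : a.re = 0) :
    Integrable fun t : ℝ => GammaR (c + t * Complex.I - a) := by
  have haI : a = a.im * Complex.I := by
    apply Complex.ext <;> simp [ha]
  have h := (integrable_GammaR hc).comp_sub_right a.im
  convert h using 3 with t
  push_cast; linear_combination -haI

lemma Maj.val_int_of_le {X : Type*} [MeasureSpace X] {f f' : X → Maj}
    (hv : ∀ x, (f' x).val = (f x).val) (hm : ∀ x, (f' x).maj ≤ (f x).maj)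
    (h : (int f).maj ≠ ∞) : (int f').maj ≠ ∞ ∧ (int f').val = (int f).val := by
  have h' : (int f').maj ≠ ∞ := ne_top_of_le_ne_top h (by
    rw [maj_int, maj_int]; exact lintegral_mono hm)
  rw [maj_int] at h
  refine ⟨h', ?_⟩
  rw [maj_int] at h'
  rw [val_int h, val_int h']
  simp only [hv]

lemma val_E (θ : ℂ) : (E θ).val = Complex.exp θ := rfl

lemma maj_E (θ : ℂ) : (E θ).maj = ENNReal.ofReal (Real.exp θ.re) := by
  rw [E, maj_of, ← ofReal_norm, Complex.norm_exp]

lemma maj_jInt_congr (m : ℕ) (a b : ℕ → ℂ) {w w' : ℂ} (h : w.re = w'.re) :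
    (jInt m a b w).maj = (jInt m a b w').maj := by
  simp only [jInt_eq, maj_int, maj_mul, maj_E]
  simp [h]

/-- The Gamma factor entering Mellin inversion, as a function on the contour. -/
def gamLine (c : ℝ) (α : ℂ) (t : ℝ) : Maj := of (GammaR (c + t * Complex.I - α))

lemma measurable_gamLine {c : ℝ} (hc : 0 < c) {α : ℂ} (hα : α.re = 0) :
    Measurable (gamLine c α) := by
  have hcont : Continuous fun t : ℝ => GammaR (c + t * Complex.I - α) :=
    continuous_iff_continuousAt.2 fun t =>
      (continuousAt_GammaR (by simpa [hα] using hc)).comp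
        (f := fun t : ℝ => (c : ℂ) + t * Complex.I - α) (by fun_prop)
  exact measurable_of.comp hcont.measurable

lemma lintegral_maj_gamLine {c : ℝ} (hc : 0 < c) {α : ℂ} (hα : α.re = 0) :
    ∫⁻ t, (gamLine c α t).maj ≠ ∞ := (integrable_GammaR_sub hc hα).2.ne

lemma val_int_gamLine {c : ℝ} (hc : 0 < c) {α : ℂ} (hα : α.re = 0) (y : ℝ) :
    (int fun t : ℝ => gamLine c α t * E (-((c + t * Complex.I) / 2 * (y : ℂ)))).val =
      4 * Real.pi * Complex.exp (-(Real.pi * Real.exp y : ℝ) - α / 2 * (y : ℂ)) := by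
  rw [val_int, ← integral_GammaR_sub_mul_exp hc hα]
  · rfl
  · have hre : ∀ t : ℝ, (E (-((c + t * Complex.I) / 2 * (y : ℂ)))).maj =
        ENNReal.ofReal (Real.exp (-(c / 2 * y))) := fun t => by
      rw [maj_E]; simp
    simp only [maj_mul, hre]
    rw [lintegral_mul_const (f := fun t => (gamLine c α t).maj) _
      (measurable_maj.comp (measurable_gamLine hc hα))]
    exact ENNReal.mul_ne_top (lintegral_maj_gamLine hc hα) ENNReal.ofReal_ne_top

lemma int_gamLine_mul_jInt {c : ℝ} (hc : 0 < c) {α : ℂ} (hα : α.re = 0) (m : ℕ) (a b : ℕ → ℂ) :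
    int (fun t : ℝ => gamLine c α t * jInt m a b (c + t * Complex.I)) =
      int fun p => jKer m a b p *
        int fun t : ℝ => gamLine c α t * E (-((c + t * Complex.I) / 2 * (p.1 : ℂ))) := by
  have hm := measurable_gamLine hc hα
  calc _ = int fun t : ℝ => int fun p => gamLine c α t *
        (jKer m a b p * E (-((c + t * Complex.I) / 2 * (p.1 : ℂ)))) := by
        refine int_congr fun t => ?_
        rw [jInt_eq, ← int_const_mul _ (by fun_prop)]
    _ = _ := by
        rw [int_swap (by unfold Function.uncurry; fun_prop)]
        refine int_congr fun p => ?_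
        rw [← int_const_mul _ (by fun_prop)]
        simp only [mul_left_comm]

/-- Evaluation of the integral of the product of Whittaker functions on `GL_{m+2}` and `GL_m` as a
Barnes integral. -/
lemma oInt_eval {m : ℕ} {a b : ℕ → ℂ} {c : ℝ} (hc : 0 < c) (ha : (a 0).re = 0)
    (h1 : ∀ j < m + 2, ∀ k < m, 0 < (a j + b k).re) (h2 : ∀ j < m + 2, 0 < ((c : ℂ) - a j).re)
    (h3 : ∀ k < m, 0 < ((c : ℂ) + b k).re) :
    (oInt m a b).maj ≠ ∞ ∧ (oInt m a b).val =
      (∏ j ∈ Finset.range (m + 2), ∏ k ∈ Finset.range m, GammaR (a j + b k)) *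
        ((4 * Real.pi : ℂ)⁻¹ * ∫ t : ℝ,
          (∏ j ∈ Finset.range (m + 2), GammaR (c + t * Complex.I - a j)) /
            ∏ k ∈ Finset.range m, GammaR (c + t * Complex.I + b k)) := by
  set a' : ℕ → ℂ := fun j => a (j + 1) with ha'
  have hpi : (4 * Real.pi : ℂ) ≠ 0 := by simp [Real.pi_ne_zero]
  have e1 : ∀ j < m + 1, ∀ k < m, 0 < (a' j + b k).re := fun j hj => h1 _ (by omega)
  have e2 : ∀ t : ℝ, ∀ j < m + 1, 0 < ((c : ℂ) + t * Complex.I - a' j).re := fun t j hj => by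
    simpa using h2 (j + 1) (by omega)
  have e3 : ∀ t : ℝ, ∀ k < m, 0 < ((c : ℂ) + t * Complex.I + b k).re := fun t k hk => by
    simpa using h3 k hk
  have hfin : (int fun t : ℝ => gamLine c (a 0) t * jInt m a' b (c + t * Complex.I)).maj ≠ ∞ := by
    have h : ∀ t : ℝ, (jInt m a' b (c + t * Complex.I)).maj =
        (jInt m a' b (c + (0 : ℝ) * Complex.I)).maj := fun t => maj_jInt_congr _ _ _ (by simp)
    simp only [maj_int, maj_mul, h]
    rw [lintegral_mul_const (f := fun t => (gamLine c (a 0) t).maj) _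
      (measurable_maj.comp (measurable_gamLine hc ha))]
    exact ENNReal.mul_ne_top (lintegral_maj_gamLine hc ha) (maj_jInt_ne_top e1 (e2 0) (e3 0))
  have hval := val_int (f := fun t : ℝ => gamLine c (a 0) t * jInt m a' b (c + t * Complex.I))
    (by rwa [maj_int] at hfin)
  rw [int_gamLine_mul_jInt hc ha] at hfin hval
  obtain ⟨hf, hv⟩ := val_int_of_le (f' := fun p => of (4 * Real.pi) * (jKer m a' b p *
      E (-(Real.pi * Real.exp p.1 : ℝ) - a 0 / 2 * (p.1 : ℂ)))) (fun p => by
      simp only [val_mul, val_int_gamLine hc ha, val_of, val_E]; ring) (fun p => by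
      have h := (int fun t : ℝ => gamLine c (a 0) t *
        E (-((c + t * Complex.I) / 2 * (p.1 : ℂ)))).enorm_val_le
      rw [val_int_gamLine hc ha] at h
      rw [mul_left_comm, maj_mul, maj_mul]
      refine mul_le_mul_right ?_ _
      exact (le_of_eq (by simp [E, enorm_mul])).trans h) hfin
  rw [int_const_mul _ (by fun_prop)] at hf hv
  have hf' : (int fun p => jKer m a' b p *
      E (-(Real.pi * Real.exp p.1 : ℝ) - a 0 / 2 * (p.1 : ℂ))).maj ≠ ∞ := fun h => by
    rw [maj_mul, h, ENNReal.mul_top (by simp [Real.pi_ne_zero])] at hf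
    exact hf rfl
  rw [oInt_eq]
  have h0 : ∀ k < m, 0 < (a 0 + b k).re := h1 0 (by omega)
  refine ⟨?_, ?_⟩
  · rw [maj_mul, maj_prod]
    exact ENNReal.mul_ne_top (ENNReal.prod_ne_top fun k hk =>
      maj_gam_ne_top (h0 k (by simpa using hk))) hf'
  · rw [val_mul, val_prod, Finset.prod_congr rfl fun k hk => val_gam (h0 k (by simpa using hk))]
    rw [val_mul, hval, val_of] at hv
    rw [← mul_right_inj' hpi]
    simp only [val_mul, val_jInt e1 (e2 _) (e3 _), gamLine, val_of] at hv
    rw [mul_left_comm, hv, Finset.prod_range_succ' _ (m + 1)]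
    simp only [Finset.prod_range_succ' _ (m + 1)]
    rw [mul_left_comm, ← mul_assoc (4 * (Real.pi : ℂ)), mul_inv_cancel₀ hpi, one_mul, mul_right_comm, mul_comm,
      ← integral_const_mul]
    congr 1
    refine integral_congr_ae (ae_of_all _ fun t => ?_)
    simp only [ha']
    ring

lemma psi_add_const : ∀ (n : ℕ) (a : ℕ → ℂ) (c : ℂ) (x : Fin n → ℝ),
    psi n (fun j => a j + c) x = E (c / 2 * ((∑ j, x j : ℝ) : ℂ)) * psi n a x
  | 0, a, c, x => by simp [psi]
  | n + 1, a, c, x => by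
    have ih := psi_add_const n (fun j => a (j + 1)) c
    rw [psi_succ, psi_succ, ← int_const_mul _ (by fun_prop)]
    refine int_congr fun u => ?_
    rw [ih, ← mul_assoc, ← mul_assoc, lam, lam, ← E_add, ← E_add]
    congr 2
    push_cast
    ring

lemma extR_coe {k : ℕ} (t : Fin k → ℝ) (i : Fin k) : extR t i = t i := by simp [extR]

lemma ofReal_exp_cpow (r : ℝ) (z : ℂ) : ((Real.exp r : ℝ) : ℂ) ^ z = Complex.exp (r * z) := by
  rw [Complex.cpow_def_of_ne_zero (by simp), ← Complex.ofReal_log (Real.exp_pos r).le,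
    Real.log_exp]

lemma image_exp_univ (k : ℕ) :
    (fun (x : Fin k → ℝ) i => Real.exp (x i)) '' Set.univ = posSet k := by
  ext t
  simp only [Set.image_univ, Set.mem_range, posSet, Set.mem_ofPred_eq]
  refine ⟨?_, fun h => ⟨fun i => Real.log (t i), funext fun i => Real.exp_log (h i)⟩⟩
  rintro ⟨x, rfl⟩ j
  exact Real.exp_pos _

/-- Exponential coordinates on the positive orthant. -/
lemma integral_posSet (k : ℕ) (F : (Fin k → ℝ) → ℂ) :
    ∫ t in posSet k, F t =
      ∫ x : Fin k → ℝ, (∏ i, (Real.exp (x i) : ℂ)) * F fun i => Real.exp (x i) := by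
  have hder : ∀ x ∈ (Set.univ : Set (Fin k → ℝ)), HasFDerivWithinAt
      (fun (x : Fin k → ℝ) i => Real.exp (x i)) (ContinuousLinearMap.pi fun i =>
        Real.exp (x i) • ContinuousLinearMap.proj (R := ℝ) (φ := fun _ : Fin k => ℝ) i)
      Set.univ x := fun x _ => by
    refine (hasFDerivAt_pi.2 fun i => ?_).hasFDerivWithinAt
    exact (Real.hasDerivAt_exp (x i)).comp_hasFDerivAt (f := fun x : Fin k → ℝ => x i) x
      (hasFDerivAt_apply i x)
  have hinj : Set.InjOn (fun (x : Fin k → ℝ) i => Real.exp (x i)) Set.univ :=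
    fun x _ y _ h => funext fun i => Real.exp_injective (congrFun h i)
  rw [← image_exp_univ,
    integral_image_eq_integral_abs_det_fderiv_smul _ MeasurableSet.univ hder hinj,
    setIntegral_univ]
  refine integral_congr_ae (ae_of_all _ fun x => ?_)
  have hdet : (ContinuousLinearMap.pi fun i =>
        Real.exp (x i) • ContinuousLinearMap.proj (R := ℝ) (φ := fun _ : Fin k => ℝ) i).det =
      ∏ i, Real.exp (x i) := by
    rw [ContinuousLinearMap.det, ← LinearMap.det_toMatrix']
    rw [← Matrix.det_diagonal]
    congr 1
    ext i j
    simp [LinearMap.toMatrix'_apply, Matrix.diagonal_apply, Pi.single_apply]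
  simp only [hdet]
  rw [abs_of_pos (Finset.prod_pos fun i _ => Real.exp_pos _), Complex.real_smul]
  push_cast
  rfl

lemma integral_posSet_sub (k : ℕ) (F : (Fin k → ℝ) → ℂ) (c : Fin k → ℝ) :
    ∫ t in posSet k, F t =
      ∫ x : Fin k → ℝ, (∏ i, (Real.exp (c i - x i) : ℂ)) * F fun i => Real.exp (c i - x i) := by
  rw [integral_posSet]
  exact (integral_sub_left_eq_self (fun x : Fin k → ℝ =>
    (∏ i, (Real.exp (x i) : ℂ)) * F fun i => Real.exp (x i)) volume c).symm

lemma sum_natSub_mul_sub : ∀ (M : ℕ) (x : Fin (M + 1) → ℂ),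
    ∑ i : Fin M, ((M - i : ℕ) : ℂ) * (x i.castSucc - x i.succ) = (M + 1) * x 0 - ∑ i, x i
  | 0, x => by simp
  | M + 1, x => by
    have ih := sum_natSub_mul_sub M fun i => x i.succ
    rw [Fin.sum_univ_succ, Fin.sum_univ_succ (f := x)]
    simp only [Fin.val_succ, Nat.reduceSubDiff, Fin.val_zero, Fin.castSucc_zero, Fin.succ_castSucc] at ih ⊢
    rw [ih]
    push_cast
    simp
    ring

lemma sum_natSub : ∀ M : ℕ, ∑ i : Fin M, ((M - i : ℕ) : ℂ) = M * (M + 1) / 2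
  | 0 => by simp
  | M + 1 => by
    have ih := sum_natSub M
    rw [Fin.sum_univ_succ]
    simp only [Fin.val_succ, Nat.reduceSubDiff]
    rw [ih]
    push_cast
    simp
    ring

lemma rep_WhittAr_two (a : ℕ → ℂ) (y : ℕ → ℝ) (ξ : Fin 2 → ℝ)
    (hy : y 0 = Real.exp ((ξ 0 - ξ 1) / 2)) :
    Rep (WhittAr 2 a y) (E (-(sumA 2 a) / 2 * (ξ 1 : ℂ)) * psi 2 a ξ) := by
  rw [psi_succ, int_snoc (by fun_prop), ← int_const_mul _ (by
    refine measurable_int ?_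
    unfold Function.uncurry; fun_prop)]
  rw [WhittAr, BesselK, integral_Ioi_eq_integral_exp]
  rw [← integral_sub_left_eq_self _ volume ((ξ 0 + ξ 1) / 2)]
  rw [← mul_assoc, ← integral_const_mul]
  refine rep_int (by
    refine Measurable.mul (by fun_prop) (measurable_int ?_)
    unfold Function.uncurry; fun_prop) fun ζ => ?_
  rw [int_fin_zero, psi_one, lam, ← E_add, ← E_add]
  convert rep_E _
  have h0 : (Fin.snoc (Fin.elim0 : Fin 0 → ℝ) ζ : Fin 1 → ℝ) 0 = ζ :=
    Fin.snoc_last (n := 0) (α := fun _ => ℝ) ζ Fin.elim0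
  simp only [lamPot, Finset.univ_unique, Fin.default_eq_zero, Finset.sum_singleton, h0,
    sumA, Finset.sum_range_succ, Finset.sum_range_zero]
  have hs : (∑ j, ξ j : ℝ) = ξ 0 + ξ 1 := Fin.sum_univ_two ξ
  have hp : (-(((2 * Real.pi * Real.exp ((ξ 0 - ξ 1) / 2) : ℝ) : ℂ) / 2) *
      ((Real.exp ((ξ 0 + ξ 1) / 2 - ζ) : ℂ) + 1 / (Real.exp ((ξ 0 + ξ 1) / 2 - ζ) : ℂ))) =
      -((Real.pi * (Real.exp (ξ 0 - ζ) + Real.exp (ζ - ξ 1)) : ℝ) : ℂ) := by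
    have e1 : Real.exp (ξ 0 - ζ) =
        Real.exp ((ξ 0 - ξ 1) / 2) * Real.exp ((ξ 0 + ξ 1) / 2 - ζ) := by
      rw [← Real.exp_add]; congr 1; ring
    have e2 : Real.exp (ζ - ξ 1) =
        Real.exp ((ξ 0 - ξ 1) / 2) * (Real.exp ((ξ 0 + ξ 1) / 2 - ζ))⁻¹ := by
      rw [← Real.exp_neg, ← Real.exp_add]; congr 1; ring
    rw [e1, e2]
    push_cast
    ring
  have hne : (Real.exp ((ξ 0 + ξ 1) / 2 - ζ) : ℂ) ≠ 0 :=
    Complex.ofReal_ne_zero.2 (Real.exp_pos _).ne'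
  rw [hy, hp, mul_div_cancel₀ _ hne, ofReal_exp_cpow, ofReal_exp_cpow, hs]
  rw [mul_comm (2 : ℂ), mul_assoc (Complex.exp _), show (2 : ℂ) * (1 / 2) = 1 by norm_num, mul_one,
    ← Complex.exp_add, ← Complex.exp_add]
  congr 1
  simp only [Fin.castSucc_zero, Fin.succ_zero_eq_one]
  push_cast
  ring

/-- Logarithmic coordinates for the factors of the recursive integrand of `WhittAr`. -/
lemma prod_whittAr_factor (M : ℕ) (hM : M ≠ 0) (α : ℂ) (y : ℕ → ℝ) (ξ : Fin (M + 1) → ℝ)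
    (ζ : Fin M → ℝ)
    (hy : ∀ j : Fin M, y j = Real.exp ((ξ j.castSucc - ξ j.succ) / 2)) :
    (∏ j : Fin M,
      Complex.exp (((-(Real.pi * y j) ^ 2 * Real.exp (ξ j.succ - Real.log Real.pi - ζ j) -
          1 / Real.exp (ξ j.succ - Real.log Real.pi - ζ j) : ℝ) : ℂ)) *
        ((Real.pi * y j : ℝ) : ℂ) ^ ((((M - j : ℕ) : ℂ) * α) / (M : ℂ)) *
        ((Real.exp (ξ j.succ - Real.log Real.pi - ζ j) : ℝ) : ℂ) ^
          ((((M + 1 : ℕ) : ℂ) * α) / (2 * (M : ℂ)))) =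
      Complex.exp (-(Real.pi * lamPot ξ ζ : ℝ) + α / 2 * ((∑ j, ξ j - ∑ j, ζ j : ℝ) : ℂ) -
        α / M / 2 * ((∑ j, ζ j : ℝ) : ℂ)) := by
  have hπ := Real.exp_log Real.pi_pos
  have h1 : ∀ j : Fin M, (Real.pi * y j) ^ 2 * Real.exp (ξ j.succ - Real.log Real.pi - ζ j) =
      Real.pi * Real.exp (ξ j.castSucc - ζ j) := fun j => by
    rw [hy]
    nth_rewrite 1 3 [← hπ]
    rw [← Real.exp_add, ← Real.exp_add, ← Real.exp_nat_mul, ← Real.exp_add]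
    congr 1
    push_cast
    ring
  have h2 : ∀ j : Fin M, 1 / Real.exp (ξ j.succ - Real.log Real.pi - ζ j) =
      Real.pi * Real.exp (ζ j - ξ j.succ) := fun j => by
    rw [one_div, ← Real.exp_neg]
    nth_rewrite 2 [← hπ]
    rw [← Real.exp_add]
    congr 1
    ring
  have h3 : ∀ j : Fin M, Real.pi * y j =
      Real.exp (Real.log Real.pi + (ξ j.castSucc - ξ j.succ) / 2) := fun j => by
    rw [Real.exp_add, hπ, hy]
  have h4 : ∀ j : Fin M,
      Complex.exp (((-(Real.pi * y j) ^ 2 * Real.exp (ξ j.succ - Real.log Real.pi - ζ j) -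
          1 / Real.exp (ξ j.succ - Real.log Real.pi - ζ j) : ℝ) : ℂ)) *
        ((Real.pi * y j : ℝ) : ℂ) ^ ((((M - j : ℕ) : ℂ) * α) / (M : ℂ)) *
        ((Real.exp (ξ j.succ - Real.log Real.pi - ζ j) : ℝ) : ℂ) ^
          ((((M + 1 : ℕ) : ℂ) * α) / (2 * (M : ℂ))) =
      Complex.exp (-(Real.pi * (Real.exp (ξ j.castSucc - ζ j) + Real.exp (ζ j - ξ j.succ)) : ℝ) +
        ((α / M * Real.log Real.pi) * ((M - j : ℕ) : ℂ) +
        (α / (2 * M)) * (((M - j : ℕ) : ℂ) * ((ξ j.castSucc : ℂ) - (ξ j.succ : ℂ))) +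
        ((M + 1) * α / (2 * M)) * (((ξ j.succ : ℂ) - (ζ j : ℂ)) - Real.log Real.pi))) := fun j => by
    rw [neg_mul, h1, h2, h3, ofReal_exp_cpow, ofReal_exp_cpow, ← Complex.exp_add,
      ← Complex.exp_add]
    congr 1
    push_cast
    ring
  rw [Finset.prod_congr rfl fun j _ => h4 j, ← Complex.exp_sum]
  congr 1
  have hpot : ∑ j : Fin M, (-((Real.pi * (Real.exp (ξ j.castSucc - ζ j) +
      Real.exp (ζ j - ξ j.succ)) : ℝ) : ℂ)) = -((Real.pi * lamPot ξ ζ : ℝ) : ℂ) := by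
    rw [lamPot, Finset.mul_sum]
    push_cast
    rw [Finset.sum_neg_distrib]
  have hM' : (M : ℂ) ≠ 0 := by exact_mod_cast hM
  have hξ : ∑ j : Fin M, (ξ j.succ : ℂ) = ∑ j, (ξ j : ℂ) - ξ 0 := by
    rw [Fin.sum_univ_succ fun j => (ξ j : ℂ)]; ring
  rw [Finset.sum_add_distrib, hpot, Finset.sum_add_distrib, Finset.sum_add_distrib,
    ← Finset.mul_sum, ← Finset.mul_sum, ← Finset.mul_sum, sum_natSub,
    sum_natSub_mul_sub M fun j => (ξ j : ℂ), Finset.sum_sub_distrib, Finset.sum_sub_distrib, hξ]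
  simp only [Finset.sum_const, Finset.card_univ, Fintype.card_fin, nsmul_eq_mul]
  push_cast
  field_simp
  ring

lemma sumA_tildeA (n : ℕ) (a : ℕ → ℂ) : sumA (n + 2) (tildeA (n + 3) a) = sumA (n + 3) a := by
  have h : (n : ℂ) + 2 ≠ 0 := by exact_mod_cast (Nat.succ_ne_zero (n + 1))
  have e : ((n + 3 : ℕ) : ℂ) - 1 = n + 2 := by push_cast; ring
  rw [sumA, sumA, Finset.sum_range_succ' _ (n + 2)]
  simp only [tildeA, Finset.sum_add_distrib, Finset.sum_const, Finset.card_range, nsmul_eq_mul, e]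
  push_cast
  rw [mul_div_cancel₀ _ h]

/-- The functions `WhittAr` in logarithmic coordinates. -/
lemma rep_WhittAr : ∀ (n : ℕ) (a : ℕ → ℂ) (y : ℕ → ℝ) (ξ : Fin (n + 1) → ℝ),
    (∀ j : Fin n, y j = Real.exp ((ξ j.castSucc - ξ j.succ) / 2)) →
    Rep (WhittAr (n + 1) a y)
      (E (-(sumA (n + 1) a) / 2 * (ξ (Fin.last n) : ℂ)) * psi (n + 1) a ξ)
  | 0, a, y, ξ, _ => by
    rw [psi_one, ← E_add]
    convert rep_E _
    rw [WhittAr, ← Complex.exp_zero]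
    congr 1
    simp [sumA]
    ring
  | 1, a, y, ξ, hy => rep_WhittAr_two a y ξ (hy 0)
  | n + 2, a, y, ξ, hy => by
    have hmeas : Measurable fun ζ : Fin (n + 2) → ℝ =>
        lam (a 0) ξ ζ * psi (n + 2) (fun j => a (j + 1)) ζ := by fun_prop
    rw [psi_succ, ← int_const_mul _ hmeas, WhittAr,
      integral_posSet_sub _ _ fun j => ξ j.succ - Real.log Real.pi]
    refine rep_int (by fun_prop) fun ζ => ?_
    set t : Fin (n + 2) → ℝ := fun j => Real.exp (ξ j.succ - Real.log Real.pi - ζ j) with ht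
    have ih := rep_WhittAr (n + 1) (tildeA (n + 3) a)
      (fun j => y (j + 1) * Real.sqrt (extR t (j + 1) / extR t j)) ζ fun j => by
        have e1 : extR t (j : ℕ) = t j.castSucc := extR_coe t j.castSucc
        have e2 : extR t ((j : ℕ) + 1) = t j.succ := extR_coe t j.succ
        have e3 : y ((j : ℕ) + 1) = _ := hy j.succ
        rw [e1, e2, e3, ht]
        simp only
        rw [← Real.exp_sub, Real.sqrt_eq_rpow, ← Real.exp_mul, ← Real.exp_add]
        congr 1
        rw [Fin.succ_castSucc]
        ring
    have hT := psi_add_const (n + 2) (fun j => a (j + 1)) (a 0 / (((n + 3 : ℕ) : ℂ) - 1)) ζ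
    have hT' : psi (n + 2) (tildeA (n + 3) a) ζ = _ := hT
    have hden : (((n + 3 : ℕ) : ℂ) - 1) = ((n + 2 : ℕ) : ℂ) := by push_cast; ring
    rw [hT', sumA_tildeA, hden] at ih
    have hP := prod_whittAr_factor (n + 2) (by omega) (a 0) y ξ ζ hy
    have hQ : ((Real.pi * extR t (n + 1) : ℝ) : ℂ) ^ (-(sumA (n + 3) a) / 2) =
        Complex.exp (-(sumA (n + 3) a) / 2 * (ξ (Fin.last (n + 2)) - ζ (Fin.last (n + 1)))) := by
      have e1 : extR t (n + 1) = t (Fin.last (n + 1)) := extR_coe t (Fin.last (n + 1))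
      have e2 : Real.pi * t (Fin.last (n + 1)) =
          Real.exp (ξ (Fin.last (n + 2)) - ζ (Fin.last (n + 1))) := by
        rw [ht]
        simp only [Fin.succ_last]
        nth_rewrite 1 [← Real.exp_log Real.pi_pos]
        rw [← Real.exp_add]
        congr 1
        ring
      rw [e1, e2, ofReal_exp_cpow]
      push_cast
      ring_nf
    have hR : (∏ i, (t i : ℂ)) ≠ 0 := Finset.prod_ne_zero_iff.2 fun i _ =>
      Complex.ofReal_ne_zero.2 (Real.exp_pos _).ne'
    convert ih.mul (rep_E (-(sumA (n + 3) a) / 2 * (ξ (Fin.last (n + 2)) - ζ (Fin.last (n + 1))) +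
      (-(Real.pi * lamPot ξ ζ : ℝ) + a 0 / 2 * ((∑ j, ξ j - ∑ j, ζ j : ℝ) : ℂ) -
        a 0 / ((n + 2 : ℕ) : ℂ) / 2 * ((∑ j, ζ j : ℝ) : ℂ)))) using 1
    · rw [Complex.exp_add, ← hP, ← hQ]
      simp only [Finset.prod_range, extR_coe]
      change (∏ i, (t i : ℂ)) * (_ * (∏ i, (t i : ℂ))⁻¹) = _
      rw [mul_comm, inv_mul_cancel_right₀ hR]
      simp only [mul_assoc]
      congr 1
      rw [mul_comm]
    · rw [lam, ← mul_assoc, ← mul_assoc, mul_right_comm _ (psi _ _ _), ← E_add, ← E_add, ← E_add]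
      congr 2
      push_cast
      ring

/-- Half the successive differences of a tuple completed by a final zero. -/
def halfDiff (m : ℕ) : (Fin m → ℝ) →ₗ[ℝ] (Fin m → ℝ) where
  toFun x j := (x j - (Fin.snoc x 0 : Fin (m + 1) → ℝ) j.succ) / 2
  map_add' x y := by
    ext j
    by_cases h : (j : ℕ) + 1 < m <;> simp [Fin.snoc, h] <;> ring
  map_smul' c x := by
    ext j
    by_cases h : (j : ℕ) + 1 < m <;> simp [Fin.snoc, h] <;> ring

lemma halfDiff_apply (m : ℕ) (x : Fin m → ℝ) (j : Fin m) :
    halfDiff m x j = (x j - (Fin.snoc x 0 : Fin (m + 1) → ℝ) j.succ) / 2 := rfl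

lemma det_halfDiff (m : ℕ) : LinearMap.det (halfDiff m) = (1 / 2) ^ m := by
  rw [← LinearMap.det_toMatrix', Matrix.det_of_isUpperTriangular]
  · have h : ∀ i, LinearMap.toMatrix' (halfDiff m) i i = 1 / 2 := fun i => by
      rw [LinearMap.toMatrix'_apply, halfDiff_apply]
      by_cases h : (i : ℕ) + 1 < m <;> simp [Fin.snoc, h, Fin.ext_iff]
    simp [h]
  · intro i j hij
    have hij' : (j : ℕ) < i := hij
    rw [LinearMap.toMatrix'_apply, halfDiff_apply]
    have h1 : (i : ℕ) ≠ j := by omega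
    have h2 : (i : ℕ) + 1 ≠ j := by omega
    by_cases h : (i : ℕ) + 1 < m <;> simp [Fin.snoc, h, Fin.ext_iff, h1, h2]

lemma integral_comp_halfDiff (m : ℕ) (f : (Fin m → ℝ) → ℂ) :
    (2 : ℂ) ^ m * ∫ x, f x = ∫ x, f (halfDiff m x) := by
  have hd : LinearMap.det (halfDiff m) ≠ 0 := by rw [det_halfDiff]; positivity
  have hm := Measure.map_linearMap_addHaar_eq_smul_addHaar (volume : Measure (Fin m → ℝ)) hd
  have he : MeasurableEmbedding (halfDiff m) :=
    (LinearEquiv.ofIsUnitDet (f := halfDiff m) (v := Pi.basisFun ℝ (Fin m))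
      (v' := Pi.basisFun ℝ (Fin m)) (by
        rw [LinearMap.det_toMatrix]; exact hd.isUnit)).toContinuousLinearEquiv
      |>.toHomeomorph.measurableEmbedding
  rw [← he.integral_map, hm, integral_smul_measure, det_halfDiff]
  rw [ENNReal.toReal_ofReal (abs_nonneg _), abs_of_pos (by positivity), Complex.real_smul]
  congr 1
  push_cast
  simp

lemma sum_succ_mul_sub : ∀ (m : ℕ) (x : Fin (m + 1) → ℂ),
    ∑ j : Fin m, ((j + 1 : ℕ) : ℂ) * (x j.castSucc - x j.succ) =
      ∑ j : Fin m, x j.castSucc - m * x (Fin.last m)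
  | 0, x => by simp
  | m + 1, x => by
    have ih := sum_succ_mul_sub m fun j => x j.castSucc
    rw [Fin.sum_univ_castSucc, Fin.sum_univ_castSucc (f := fun j => x (Fin.castSucc j))]
    simp only [Fin.val_castSucc, Fin.val_last, Fin.succ_last, Fin.succ_castSucc] at ih ⊢
    rw [ih]
    push_cast
    ring

/-- The zeta integral in logarithmic coordinates. -/
lemma rep_zetaGLm (k : ℕ) (a a' : ℕ → ℂ) (s : ℂ) :
    Rep (zetaGLm (k + 3) (k + 1) a a' s) (oInt (k + 1) a fun j => a' j + s) := by
  rw [zetaGLm, integral_posSet, integral_comp_halfDiff]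
  refine rep_int (by fun_prop) fun x => ?_
  set y : Fin (k + 1) → ℝ := fun i => Real.exp (halfDiff (k + 1) x i) with hy
  set X : Fin (k + 2) → ℝ := Fin.snoc x 0 with hX
  have hyX : ∀ i, y i = Real.exp ((X i.castSucc - X i.succ) / 2) := fun i => by
    rw [hy]
    simp only [halfDiff_apply, hX, Fin.snoc_castSucc]
  have h1 := rep_WhittAr (k + 2) a (extR y) (Fin.snoc X 0) fun j => by
    refine Fin.lastCases ?_ (fun i => ?_) j
    · simp [extR, hX]
    · rw [Fin.succ_castSucc, Fin.snoc_castSucc, Fin.snoc_castSucc, ← hyX]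
      exact extR_coe y i
  have h2 := rep_WhittAr k a' (extR y) x fun j => by
    have e : extR y (j : ℕ) = y j.castSucc := extR_coe y j.castSucc
    rw [e, hyX, Fin.succ_castSucc, hX, Fin.snoc_castSucc, Fin.snoc_castSucc]
  have hw1 : WhittAhat (k + 3) a (extR y) = WhittAr (k + 3) a (extR y) := by
    have e : extR y (k + 3 - 1) = 1 := by simp [extR]
    rw [WhittAhat, e]
    simp
  have hw2 : WhittAhat (k + 1) a' (extR y) =
      Complex.exp (sumA (k + 1) a' / 2 * (x (Fin.last k) : ℂ)) * WhittAr (k + 1) a' (extR y) := by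
    have e : extR y (k + 1 - 1) = Real.exp (x (Fin.last k) / 2) := by
      have e' : extR y (k + 1 - 1) = y (Fin.last k) := extR_coe y (Fin.last k)
      rw [e', hyX, Fin.succ_last, hX, Fin.snoc_castSucc, Fin.snoc_last, sub_zero]
    rw [WhittAhat, e, ofReal_exp_cpow]
    congr 2
    push_cast
    ring
  have hP : (∏ i, (y i : ℂ)) * ∏ j ∈ Finset.range (k + 1),
      (((extR y j : ℝ) : ℂ) ^ (((j + 1 : ℕ) : ℂ) * s) / ((extR y j : ℝ) : ℂ)) =
      Complex.exp (s / 2 * ((∑ j, x j : ℝ) : ℂ)) := by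
    have hR : ∀ i, (y i : ℂ) ≠ 0 := fun i => Complex.ofReal_ne_zero.2 (Real.exp_pos _).ne'
    simp only [Finset.prod_range, extR_coe]
    rw [← Finset.prod_mul_distrib, Finset.prod_congr rfl fun i _ => mul_div_cancel₀ _ (hR i)]
    simp only [hyX, ofReal_exp_cpow]
    rw [← Complex.exp_sum]
    have := sum_succ_mul_sub (k + 1) fun j => (X j : ℂ)
    simp only [hX, Fin.snoc_castSucc, Fin.snoc_last, Complex.ofReal_zero, mul_zero, sub_zero] at this
    congr 1
    push_cast at this ⊢
    rw [← this, Finset.mul_sum]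
    refine Finset.sum_congr rfl fun j _ => ?_
    simp only [hX, Fin.snoc_castSucc]
    ring
  have h3 := (h1.mul (h2.mul (rep_E (sumA (k + 1) a' / 2 * (x (Fin.last k) : ℂ) +
    s / 2 * ((∑ j, x j : ℝ) : ℂ)))))
  convert h3 using 1
  · rw [hw1, hw2, Complex.exp_add, ← hP]
    ring
  · rw [psi_add_const, mul_assoc, mul_right_comm (E _), ← E_add, Fin.snoc_last,
      Complex.ofReal_zero, mul_zero, E_zero, one_mul]
    congr 3
    ring

/-- Evaluation of the archimedean `GL_n × GL_{n-2}` zeta integral: the local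
`L`-factor times a single Barnes integral (Theorem 2.3 of Ishii–Stade). -/
theorem gl_glnminus2_zeta (n : ℕ) (hn : 3 ≤ n)
    (a a' : ℕ → ℂ) (ha : ∀ j < n, (a j).re = 0) (ha' : ∀ k < n - 2, (a' k).re = 0)
    (s : ℂ) (hs : 0 < s.re) (c : ℝ)
    (hc1 : ∀ j < n, 0 < ((c : ℂ) - a j).re)
    (hc2 : ∀ j < n - 2, 0 < (s + (c : ℂ) + a' j).re) :
    zetaGLm n (n - 2) a a' s =
      (∏ j ∈ Finset.range n, ∏ k ∈ Finset.range (n - 2), GammaR (s + a j + a' k)) *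
        ((4 * (Real.pi : ℂ) * Complex.I)⁻¹ *
          VInt c (fun w =>
            (∏ j ∈ Finset.range n, GammaR (w - a j)) /
              ∏ j ∈ Finset.range (n - 2), GammaR (s + w + a' j))) := by
  obtain ⟨k, rfl⟩ : ∃ k, n = k + 3 := ⟨n - 3, by omega⟩
  have hk : k + 3 - 2 = k + 1 := by omega
  rw [hk] at ha' hc2 ⊢
  have hc : 0 < c := by simpa [ha 0 (by omega)] using hc1 0 (by omega)
  obtain ⟨hfin, hval⟩ := oInt_eval (m := k + 1) (a := a) (b := fun j => a' j + s) hc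
    (ha 0 (by omega)) (fun i hi j hj => by simpa [ha i hi, ha' j hj] using hs) hc1
    (fun j hj => by simpa [add_comm, add_left_comm] using hc2 j hj)
  rw [rep_zetaGLm k a a' s hfin, hval, VInt]
  congr 1
  · refine Finset.prod_congr rfl fun i _ => Finset.prod_congr rfl fun j _ => ?_
    congr 1
    ring
  · rw [← mul_assoc, mul_inv (4 * (Real.pi : ℂ)), mul_assoc (4 * (Real.pi : ℂ))⁻¹,
      inv_mul_cancel₀ Complex.I_ne_zero, mul_one]
    congr 2
    ext t
    congr 1
    refine Finset.prod_congr rfl fun j _ => ?_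
    congr 1
    ring

end
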